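/- arXiv:1611.10315 — 4 statements merged into one kernel-verified Lean document; each statement's English description precedes it below -/
import Mathlib

section
/- Every semi-algebraic graph property is easily testable: for all integers k, t ≥ 1, all real polynomials f₁,…,f_t in 2k variables, and every Boolean function Φ : {true,false}^t → {true,false}, the graph property P consisting of all graphs G for which one can assign a point p_v ∈ ℝ^k to each vertex v ∈ V(G) so that two distinct vertices u,v are adjacent if and only if Φ( f₁(p_u,p_v) ≥ 0; … ; f_t(p_u,p_v) ≥ 0 ) = true, is easily testable. -/
open scoped Classical
open Finset

noncomputable section

/-- Number of unordered vertex pairs on which two graphs on the same vertex set differ. -/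
def editDist {n : ℕ} (G H : SimpleGraph (Fin n)) : ℕ :=
  Set.ncard {e : Sym2 (Fin n) | (e ∈ G.edgeSet ∧ e ∉ H.edgeSet) ∨ (e ∉ G.edgeSet ∧ e ∈ H.edgeSet)}

/-- `G` is `ε`-far from satisfying the graph property `P`. -/
def Far (P : ∀ n : ℕ, Set (SimpleGraph (Fin n))) {n : ℕ} (G : SimpleGraph (Fin n)) (ε : ℝ) : Prop :=
  ∀ H : SimpleGraph (Fin n), H ∈ P n → ε * (n : ℝ) ^ 2 ≤ (editDist G H : ℝ)

/-- The subgraph induced by a vertex subset `Q` of size `m`, as a graph on `Fin m`. -/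
def inducedOn {n : ℕ} (G : SimpleGraph (Fin n)) {m : ℕ} (Q : Finset (Fin n))
    (h : Q.card = m) : SimpleGraph (Fin m) :=
  G.comap fun i => ((Q.orderIsoOfFin h) i : Fin n)

/-- A graph property is easily testable if for some constant `c > 0`, for every `ε ∈ (0,1/2)`
and every graph on at least `ε ^ (-c)` vertices which is `ε`-far from `P`, at least a
`2/3`-fraction of the `⌈ε ^ (-c)⌉`-element vertex subsets induce a subgraph not satisfying `P`. -/
def EasilyTestable (P : ∀ n : ℕ, Set (SimpleGraph (Fin n))) : Prop :=
  ∃ c : ℝ, 0 < c ∧ ∀ ε : ℝ, 0 < ε → ε < 1 / 2 → ∀ n : ℕ, ∀ G : SimpleGraph (Fin n),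
    ε ^ (-c) ≤ (n : ℝ) → Far P G ε →
    (2 / 3 : ℝ) * (((Finset.univ : Finset (Fin n)).powersetCard ⌈ε ^ (-c)⌉₊).card : ℝ) ≤
      ((((Finset.univ : Finset (Fin n)).powersetCard ⌈ε ^ (-c)⌉₊).filter
        fun Q => ∃ h : Q.card = ⌈ε ^ (-c)⌉₊, inducedOn G Q h ∉ P ⌈ε ^ (-c)⌉₊).card : ℝ)

/-- The property of being induced `𝓕`-free. -/
def InducedFree (𝓕 : Set (Σ k : ℕ, SimpleGraph (Fin k))) : ∀ n : ℕ, Set (SimpleGraph (Fin n)) :=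
  fun n => {G | ∀ p ∈ 𝓕, IsEmpty (p.2 ↪g G)}

/-- A graph is bipartite: its vertex set can be partitioned into two independent sets. -/
def IsBipGraph {V : Type*} (H : SimpleGraph V) : Prop :=
  ∃ A : Set V, (∀ u ∈ A, ∀ v ∈ A, ¬ H.Adj u v) ∧ (∀ u ∉ A, ∀ v ∉ A, ¬ H.Adj u v)

/-- A graph is co-bipartite: its vertex set can be partitioned into two cliques. -/
def IsCoBipGraph {V : Type*} (H : SimpleGraph V) : Prop :=
  ∃ A : Set V, (∀ u ∈ A, ∀ v ∈ A, u ≠ v → H.Adj u v) ∧ (∀ u ∉ A, ∀ v ∉ A, u ≠ v → H.Adj u v)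

/-- A graph is split: its vertex set can be partitioned into a clique and an independent set. -/
def IsSplitGraph {V : Type*} (H : SimpleGraph V) : Prop :=
  ∃ A : Set V, (∀ u ∈ A, ∀ v ∈ A, u ≠ v → H.Adj u v) ∧ (∀ u ∉ A, ∀ v ∉ A, ¬ H.Adj u v)

/-- The semi-algebraic graph property determined by the polynomials `f i` (in `2k` variables,
the first `k` indexed by `Sum.inl` and the last `k` by `Sum.inr`) and the Boolean function `Φ`:
a graph satisfies it iff one can assign a point `p v ∈ ℝ^k` to each vertex `v` so that two
distinct vertices `u, v` are adjacent iff `Φ (f₁(p_u,p_v) ≥ 0, …, f_t(p_u,p_v) ≥ 0) = true`. -/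
def SemiAlgebraicProp (k t : ℕ) (f : Fin t → MvPolynomial (Fin k ⊕ Fin k) ℝ)
    (Φ : (Fin t → Bool) → Bool) : ∀ n : ℕ, Set (SimpleGraph (Fin n)) :=
  fun n => {G | ∃ p : Fin n → (Fin k → ℝ), ∀ u v : Fin n, u ≠ v →
    (G.Adj u v ↔
      Φ (fun i => decide (0 ≤ MvPolynomial.eval (Sum.elim (p u) (p v)) (f i))) = true)}

/-! ### Uniform probability on function spaces -/

def Pr (κ W : Type) [Fintype κ] [Fintype W] (p : (κ → W) → Prop) : ℝ :=
  ((Finset.univ.filter p).card : ℝ) / (Fintype.card (κ → W) : ℝ)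

section prob
variable {κ ι W X : Type} [Fintype κ] [Fintype ι] [Fintype W] [Fintype X]

lemma Pr_eq [DecidableEq κ] (p : (κ → W) → Prop) [DecidablePred p] :
    Pr κ W p = ((Finset.univ.filter p).card : ℝ) / (Fintype.card (κ → W) : ℝ) := by
  unfold Pr
  congr!

lemma Pr_nonneg (p : (κ → W) → Prop) : 0 ≤ Pr κ W p := by unfold Pr; positivity

lemma Pr_le_one (p : (κ → W) → Prop) : Pr κ W p ≤ 1 := by
  unfold Pr
  apply div_le_one_of_le₀ _ (by positivity)
  exact_mod_cast Finset.card_le_univ _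

lemma Pr_mono {p q : (κ → W) → Prop} (h : ∀ ω, p ω → q ω) : Pr κ W p ≤ Pr κ W q := by
  unfold Pr
  gcongr with ω
  exact h ω

lemma Pr_or_le (p q : (κ → W) → Prop) : Pr κ W (fun ω => p ω ∨ q ω) ≤ Pr κ W p + Pr κ W q := by
  rw [Pr_eq (fun ω => p ω ∨ q ω), Pr_eq p, Pr_eq q, ← add_div]
  gcongr
  rw [Finset.filter_or]
  exact_mod_cast Finset.card_union_le _ _

lemma Pr_exists_le (p : X → (κ → W) → Prop) :
    Pr κ W (fun ω => ∃ x, p x ω) ≤ ∑ x, Pr κ W (p x) := by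
  rw [Pr_eq]
  simp_rw [Pr_eq]
  rw [← Finset.sum_div]
  gcongr
  have : (Finset.univ.filter fun ω => ∃ x, p x ω) =
      Finset.univ.biUnion fun x => Finset.univ.filter (p x) := by
    ext ω; simp
  rw [this]
  exact_mod_cast Finset.card_biUnion_le

lemma Pr_marg [Nonempty W] (e : κ → ι) (he : Function.Injective e) (p : (κ → W) → Prop) :
    Pr ι W (fun ω => p (ω ∘ e)) = Pr κ W p := by
  let C : Type := {i : ι // i ∉ Set.range e}
  let E : κ ⊕ C ≃ ι :=
    ((Equiv.ofInjective e he).sumCongr (Equiv.refl C)).trans (Equiv.Set.sumCompl (Set.range e))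
  have hE : ∀ k, E (Sum.inl k) = e k := by
    intro k; rfl
  let F : (ι → W) ≃ (κ → W) × (C → W) :=
    (E.symm.arrowCongr (Equiv.refl W)).trans (Equiv.sumArrowEquivProdArrow κ C W)
  have hF : ∀ ω, (F ω).1 = ω ∘ e := by
    intro ω; ext k; simp [F, Equiv.sumArrowEquivProdArrow, Equiv.arrowCongr, hE]
  unfold Pr
  have h1 : (Finset.univ.filter fun ω : ι → W => p (ω ∘ e)).card =
      ((Finset.univ.filter p) ×ˢ (Finset.univ : Finset (C → W))).card := by
    apply Finset.card_equiv F
    intro ω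
    simp [hF]
  have h2 : Fintype.card (ι → W) = Fintype.card (κ → W) * Fintype.card (C → W) := by
    rw [Fintype.card_congr F, Fintype.card_prod]
  rw [h1, h2, Finset.card_product, Finset.card_univ]
  push_cast
  rw [mul_div_mul_right]
  have : 0 < Fintype.card (C → W) := Fintype.card_pos
  positivity

lemma Pr_sum_eq [Nonempty W] (p : X → (κ → W) → Prop) (e : X → κ → ι)
    (he : ∀ x, Function.Injective (e x)) :
    ∑ x, Pr κ W (p x) = (∑ ω : ι → W, ((Finset.univ.filter fun x => p x (ω ∘ e x)).card : ℝ)) /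
      (Fintype.card (ι → W) : ℝ) := by
  have : ∀ x, Pr κ W (p x) = Pr ι W (fun ω => p x (ω ∘ e x)) := fun x => (Pr_marg _ (he x) _).symm
  simp_rw [this, Pr_eq]
  rw [← Finset.sum_div]
  congr 1
  simp_rw [Finset.card_filter]
  push_cast
  rw [Finset.sum_comm]

lemma Pr_sum_le [Nonempty W] (p : X → (κ → W) → Prop) (e : X → κ → ι)
    (he : ∀ x, Function.Injective (e x)) (C : ℝ)
    (h : ∀ ω : ι → W, ((Finset.univ.filter fun x => p x (ω ∘ e x)).card : ℝ) ≤ C) :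
    ∑ x, Pr κ W (p x) ≤ C := by
  rw [Pr_sum_eq p e he]
  have : 0 < Fintype.card (ι → W) := Fintype.card_pos
  rw [div_le_iff₀ (by positivity)]
  calc _ ≤ ∑ ω : ι → W, C := Finset.sum_le_sum fun ω _ => h ω
    _ = _ := by rw [Finset.sum_const, Finset.card_univ, nsmul_eq_mul, mul_comm]

lemma Pr_sum_le_sum [Nonempty W] (p q : X → (κ → W) → Prop) (e : X → κ → ι)
    (he : ∀ x, Function.Injective (e x))
    (h : ∀ ω : ι → W, (Finset.univ.filter fun x => p x (ω ∘ e x)).card ≤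
      (Finset.univ.filter fun x => q x (ω ∘ e x)).card) :
    ∑ x, Pr κ W (p x) ≤ ∑ x, Pr κ W (q x) := by
  rw [Pr_sum_eq p e he, Pr_sum_eq q e he]
  apply div_le_div_of_nonneg_right _ (by positivity)
  apply Finset.sum_le_sum
  intro ω _
  exact_mod_cast h ω

lemma Pr_collision [Nonempty W] {i j : ι} (hij : i ≠ j) :
    Pr ι W (fun ω => ω i = ω j) = 1 / (Fintype.card W : ℝ) := by
  have := Pr_marg (W := W) (fun b : Bool => if b then i else j)
    (by intro a b h; cases a <;> cases b <;> simp_all [Ne.symm hij]) (fun f => f true = f false)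
  simp only [Function.comp_apply, if_true] at this
  simp only [Bool.false_eq_true, if_false] at this
  rw [this, Pr_eq]
  have h1 : (Finset.univ.filter fun f : Bool → W => f true = f false).card = Fintype.card W := by
    rw [← Finset.card_univ]
    symm
    apply Finset.card_bij (fun w _ => fun _ => w)
    · simp
    · intro a _ b _ h; exact congrFun h true
    · intro f hf
      refine ⟨f true, by simp, ?_⟩
      ext b; cases b <;> simp_all
  rw [h1]
  have : 0 < Fintype.card W := Fintype.card_pos
  simp only [Fintype.card_pi, Finset.prod_const, Finset.card_univ, Fintype.card_bool]
  push_cast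
  field_simp

lemma Pr_sum_bool (p : (ι ⊕ Bool → W) → Prop) :
    Pr (ι ⊕ Bool) W p * ((Fintype.card (ι → W) : ℝ) * (Fintype.card W : ℝ) ^ 2) =
      ∑ ω : ι → W, ∑ x : W × W, if p (Sum.elim ω (fun b => if b then x.2 else x.1)) then 1 else 0 := by
  rcases isEmpty_or_nonempty W with hW | hW
  · simp [Pr]
  have : 0 < Fintype.card W := Fintype.card_pos
  have : 0 < Fintype.card (ι → W) := Fintype.card_pos
  rw [Pr_eq]
  have h2 : (Fintype.card (ι ⊕ Bool → W) : ℝ) = (Fintype.card (ι → W) : ℝ) * (Fintype.card W : ℝ) ^ 2 := by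
    simp [pow_add]
  rw [h2, div_mul_cancel₀ _ (by positivity), ← Finset.sum_product', Finset.card_filter]
  push_cast
  symm
  let F : (ι → W) × (W × W) ≃ (ι ⊕ Bool → W) :=
    ((Equiv.refl _).prodCongr (Equiv.boolArrowEquivProd W).symm).trans
      (Equiv.sumArrowEquivProdArrow ι Bool W).symm
  apply Fintype.sum_equiv F
  rintro ⟨ω, a, b⟩
  have : F (ω, a, b) = Sum.elim ω (fun c => if c then b else a) := by
    ext z; rcases z with z | z
    · rfl
    · cases z <;> rfl
  rw [this]

end prob

/-! ### Cyclic successor in a class -/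
section cyc
variable {N : ℕ} [NeZero N] {Λ : Type}

lemma stp_ex (c : ZMod N → Λ) : ∃ d : ℕ, 1 ≤ d ∧ c (d : ZMod N) = c 0 :=
  ⟨N, NeZero.one_le, by simp⟩

def jump (c : ZMod N → Λ) : ZMod N := ((Nat.find (stp_ex c) : ℕ) : ZMod N)

def nxt (c : ZMod N → Λ) (x : ZMod N) : ZMod N := x + jump (fun z => c (x + z))

lemma c_nxt (c : ZMod N → Λ) (x : ZMod N) : c (nxt c x) = c x := by
  have := (Nat.find_spec (stp_ex (fun z => c (x + z)))).2
  simpa [nxt, jump] using this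

lemma nxt_inj_aux (c : ZMod N → Λ) (x y : ZMod N) (h : nxt c x = nxt c y)
    (hlt : Nat.find (stp_ex (fun z => c (x + z))) < Nat.find (stp_ex (fun z => c (y + z)))) :
    False := by
  have hx := c_nxt c x
  have hy := c_nxt c y
  unfold nxt jump at h hx hy
  have hx1 := (Nat.find_spec (stp_ex (fun z => c (x + z)))).1
  set d := Nat.find (stp_ex (fun z => c (x + z))) with hd
  set d' := Nat.find (stp_ex (fun z => c (y + z))) with hd'
  have hm : d' - d < Nat.find (stp_ex (fun z => c (y + z))) := by rw [← hd']; omega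
  refine Nat.find_min (stp_ex (fun z => c (y + z))) hm ⟨by omega, ?_⟩
  have e : y + ((d' - d : ℕ) : ZMod N) = x := by
    rw [Nat.cast_sub hlt.le, add_sub_assoc', ← h]; ring
  rw [e, add_zero, ← hx, h, hy]

lemma nxt_inj (c : ZMod N → Λ) : Function.Injective (nxt c) := by
  intro x y h
  rcases lt_trichotomy (Nat.find (stp_ex (fun z => c (x + z))))
    (Nat.find (stp_ex (fun z => c (y + z)))) with hl | hl | hl
  · exact (nxt_inj_aux c x y h hl).elim
  · unfold nxt jump at h
    rw [hl] at h
    exact add_right_cancel h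
  · exact (nxt_inj_aux c y x h.symm hl).elim

lemma nxt_self (c : ZMod N → Λ) (x : ZMod N) (h : nxt c x = x) (y : ZMod N) (hy : c y = c x) :
    y = x := by
  by_contra hne
  have hz : y - x ≠ 0 := sub_ne_zero.2 hne
  have hpos : 1 ≤ (y - x).val := Nat.one_le_iff_ne_zero.2 (by rwa [Ne, ZMod.val_eq_zero])
  have hle : Nat.find (stp_ex (fun z => c (x + z))) ≤ (y - x).val := by
    apply Nat.find_min'
    refine ⟨hpos, ?_⟩
    simp [hy]
  have h1 := (Nat.find_spec (stp_ex (fun z => c (x + z)))).1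
  have h2 : ((Nat.find (stp_ex (fun z => c (x + z))) : ℕ) : ZMod N) = 0 := by
    unfold nxt jump at h
    simpa using h
  rw [ZMod.natCast_eq_zero_iff] at h2
  have h3 := Nat.le_of_dvd h1 h2
  have h4 := ZMod.val_lt (y - x)
  omega

lemma card_self_le [DecidableEq Λ] (c : ZMod N → Λ) :
    (Finset.univ.filter fun x => nxt c x = x).card ≤ (Finset.univ.image c).card := by
  apply Finset.card_le_card_of_injOn c
  · intro x _; simp
  · intro x _ y hy h
    exact nxt_self c y (by simpa using hy) x h

def cnt (c : ZMod N → Λ) (x : ZMod N) : ℕ := (Finset.univ.filter fun y => c y = c x).card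

lemma cnt_congr (c : ZMod N → Λ) {x y : ZMod N} (h : c x = c y) : cnt c x = cnt c y := by
  unfold cnt; rw [h]

lemma cnt_pos (c : ZMod N → Λ) (x : ZMod N) : 0 < cnt c x :=
  Finset.card_pos.2 ⟨x, by simp⟩

lemma cnt_le (c : ZMod N → Λ) (x : ZMod N) : cnt c x ≤ N := by
  unfold cnt
  calc _ ≤ Fintype.card (ZMod N) := Finset.card_le_univ _
    _ = N := ZMod.card N

lemma switch_le (c c' : ZMod N → Λ) (val : ZMod N → Prop)
    (hc : ∀ x y, c' x = c' y ↔ c x = c y ∧ (val x ↔ val y)) :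
    (Finset.univ.filter fun x => ¬ (val x ↔ val (nxt c x))).card ≤
      2 * (Finset.univ.filter fun x => 2 * cnt c' x ≤ cnt c x).card := by
  have hsub : (Finset.univ.filter fun x => ¬ (val x ↔ val (nxt c x))) ⊆
      (Finset.univ.filter fun x => 2 * cnt c' x ≤ cnt c x) ∪
      (Finset.univ.filter fun x => 2 * cnt c' (nxt c x) ≤ cnt c (nxt c x)) := by
    intro x hx
    simp only [Finset.mem_filter, Finset.mem_univ, true_and, Finset.mem_union] at hx ⊢
    rw [cnt_congr c (c_nxt c x)]
    have : cnt c' x + cnt c' (nxt c x) ≤ cnt c x := by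
      unfold cnt
      rw [← Finset.card_union_of_disjoint]
      · apply Finset.card_le_card
        intro y
        simp only [Finset.mem_union, Finset.mem_filter, Finset.mem_univ, true_and, hc, c_nxt]
        tauto
      · rw [Finset.disjoint_left]
        intro y
        simp only [Finset.mem_filter, Finset.mem_univ, true_and, hc]
        tauto
    omega
  have h2 : (Finset.univ.filter fun x => 2 * cnt c' (nxt c x) ≤ cnt c (nxt c x)).card ≤
      (Finset.univ.filter fun x => 2 * cnt c' x ≤ cnt c x).card := by
    apply Finset.card_le_card_of_injOn (nxt c)
    · intro x hx; simpa using hx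
    · exact (nxt_inj c).injOn
  calc _ ≤ _ := Finset.card_le_card hsub
    _ ≤ _ := Finset.card_union_le _ _
    _ ≤ _ := by omega

lemma halving (u : ℕ → ℕ) (hpos : ∀ i, 0 < u i) (hanti : ∀ i, u (i + 1) ≤ u i) (m : ℕ) :
    ((Finset.range m).filter fun i => 2 * u (i + 1) ≤ u i).card + Nat.log 2 (u m) ≤
      Nat.log 2 (u 0) := by
  induction m with
  | zero => simp
  | succ m ih =>
    rw [Finset.range_add_one, Finset.filter_insert]
    split_ifs with h
    · rw [Finset.card_insert_of_notMem (by simp)]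
      have : Nat.log 2 (u (m + 1)) + 1 ≤ Nat.log 2 (u m) := by
        rw [← Nat.log_mul_base (by norm_num) (hpos _).ne']
        exact Nat.log_mono_right (by omega)
      omega
    · have := Nat.log_mono_right (b := 2) (hanti m)
      omega

end cyc
/-! ### Sign patterns -/
section vc

lemma sum_choose_le (L D : ℕ) : ∑ i ∈ Finset.Iic D, L.choose i ≤ (L + 1) ^ D := by
  rw [add_pow, ← Nat.range_succ_eq_Iic]
  apply Finset.sum_le_sum
  intro i hi
  rw [Finset.mem_range] at hi
  simp only [one_pow, mul_one]
  have h1 : 1 ≤ D.choose i := Nat.choose_pos (by omega)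
  calc L.choose i ≤ L ^ i := Nat.choose_le_pow L i
    _ ≤ _ := Nat.le_mul_of_pos_right _ h1

lemma pattern_linear {σ Y : Type} [Fintype σ] {L : ℕ} (A : Y → σ → ℝ) (Bv : Fin L → σ → ℝ) :
    ((Finset.univ : Finset (Finset (Fin L))).filter fun s =>
      ∃ x, s = Finset.univ.filter fun l => 0 ≤ ∑ m, A x m * Bv l m).card ≤
      (L + 1) ^ Fintype.card σ := by
  set 𝒜 := (Finset.univ : Finset (Finset (Fin L))).filter fun s =>
      ∃ x, s = Finset.univ.filter fun l => 0 ≤ ∑ m, A x m * Bv l m with h𝒜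
  have key : 𝒜.vcDim ≤ Fintype.card σ := by
    unfold Finset.vcDim
    apply Finset.sup_le
    intro s hs
    rw [Finset.mem_shatterer] at hs
    by_contra hcard
    push Not at hcard
    have hdep : ¬ LinearIndependent ℝ (fun l : s => Bv l) := by
      intro hli
      have := hli.fintype_card_le_finrank
      simp at this
      omega
    rw [Fintype.not_linearIndependent_iff] at hdep
    obtain ⟨g, hg, hne⟩ := hdep
    -- may assume a negative coefficient
    obtain ⟨g, hg, l0, hl0⟩ : ∃ g : s → ℝ, (∑ l, g l • Bv l = 0) ∧ ∃ l0, g l0 < 0 := by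
      obtain ⟨l0, h0⟩ := hne
      rcases lt_or_gt_of_ne h0 with h | h
      · exact ⟨g, hg, l0, h⟩
      · refine ⟨fun l => - g l, ?_, l0, by simpa using h⟩
        simp only [neg_smul, Finset.sum_neg_distrib, hg, neg_zero]
    have hsub : (Finset.univ.filter fun l : s => 0 ≤ g l).map (Function.Embedding.subtype _) ⊆ s := by
      intro l hl
      simp only [Finset.mem_map, Finset.mem_filter, Finset.mem_univ, true_and] at hl
      obtain ⟨l', _, rfl⟩ := hl
      exact l'.2
    obtain ⟨u, hu, hsu⟩ := hs hsub
    rw [h𝒜, Finset.mem_filter] at hu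
    obtain ⟨_, x, rfl⟩ := hu
    have hiff : ∀ l : s, (0 ≤ ∑ m, A x m * Bv l m) ↔ 0 ≤ g l := by
      intro l
      have := Finset.ext_iff.1 hsu l
      simp only [Finset.mem_inter, Finset.mem_filter, Finset.mem_univ, true_and, Finset.mem_map,
        l.2, Function.Embedding.subtype_apply] at this
      rw [this]
      constructor
      · rintro ⟨a, ha, hal⟩
        rwa [← Subtype.ext hal]
      · intro h; exact ⟨l, h, rfl⟩
    have hzero : ∑ l : s, g l * ∑ m, A x m * Bv l m = 0 := by
      have : ∀ m, ∑ l : s, g l * Bv l m = 0 := by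
        intro m
        have := congrFun hg m
        simpa using this
      calc _ = ∑ m, A x m * ∑ l : s, g l * Bv l m := by
            simp_rw [Finset.mul_sum]
            rw [Finset.sum_comm]
            apply Finset.sum_congr rfl; intro m _
            apply Finset.sum_congr rfl; intro l _
            ring
        _ = 0 := by simp only [this, mul_zero, Finset.sum_const_zero]
    have hpos : 0 < ∑ l : s, g l * ∑ m, A x m * Bv l m := by
      apply Finset.sum_pos'
      · intro l _
        by_cases h : 0 ≤ g l
        · exact mul_nonneg h ((hiff l).2 h)
        · have h' : ¬ 0 ≤ ∑ m, A x m * Bv l m := fun hh => h ((hiff l).1 hh)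
          exact (mul_pos_of_neg_of_neg (not_le.1 h) (not_le.1 h')).le
      · refine ⟨l0, by simp, ?_⟩
        have h' : ¬ 0 ≤ ∑ m, A x m * Bv l0 m := fun hh => not_lt.2 ((hiff l0).1 hh) hl0
        exact mul_pos_of_neg_of_neg hl0 (not_le.1 h')
    exact hpos.ne' hzero
  calc 𝒜.card ≤ 𝒜.shatterer.card := Finset.card_le_card_shatterer _
    _ ≤ ∑ i ∈ Finset.Iic 𝒜.vcDim, (Fintype.card (Fin L)).choose i :=
        Finset.card_shatterer_le_sum_vcDim
    _ ≤ (L + 1) ^ 𝒜.vcDim := by simpa using sum_choose_le L 𝒜.vcDim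
    _ ≤ _ := Nat.pow_le_pow_right (by omega) key

lemma pattern_poly {k L : ℕ} (f : MvPolynomial (Fin k ⊕ Fin k) ℝ) (y : Fin L → Fin k → ℝ) :
    ((Finset.univ : Finset (Finset (Fin L))).filter fun s =>
      ∃ x : Fin k → ℝ, s = Finset.univ.filter fun l =>
        0 ≤ MvPolynomial.eval (Sum.elim x (y l)) f).card ≤ (L + 1) ^ f.support.card := by
  have h := pattern_linear (σ := f.support) (L := L)
    (fun (x : Fin k → ℝ) d => f.coeff d * ∏ i, x i ^ (d.1 (Sum.inl i)))
    (fun l d => ∏ i, y l i ^ (d.1 (Sum.inr i)))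
  rw [Fintype.card_coe] at h
  convert h using 11
  rw [MvPolynomial.eval_eq', ← Finset.sum_coe_sort]
  apply Finset.sum_congr rfl
  intro d _
  rw [Fintype.prod_sum_type]
  simp [mul_assoc]

end vc

section labels
variable {n : ℕ} (G : SimpleGraph (Fin n)) {L : ℕ}

/-- the trace of `u` on the first `i` sampled vertices -/
def lab (τ : Fin L → Fin n) (i : ℕ) (u : Fin n) : Fin L → Prop :=
  fun l => l.val < i ∧ G.Adj u (τ l)

def GoodSet (k t : ℕ) (f : Fin t → MvPolynomial (Fin k ⊕ Fin k) ℝ)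
    (Φ : (Fin t → Bool) → Bool) (S : Set (Fin n)) : Prop :=
  ∃ p : Fin n → (Fin k → ℝ), ∀ u ∈ S, ∀ v ∈ S, u ≠ v →
    (G.Adj u v ↔ Φ (fun i => decide (0 ≤ MvPolynomial.eval (Sum.elim (p u) (p v)) (f i))) = true)

variable {G}

lemma GoodSet.mono {k t : ℕ} {f : Fin t → MvPolynomial (Fin k ⊕ Fin k) ℝ}
    {Φ : (Fin t → Bool) → Bool} {S S' : Set (Fin n)} (h : GoodSet G k t f Φ S') (hs : S ⊆ S') :
    GoodSet G k t f Φ S := by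
  obtain ⟨p, hp⟩ := h
  exact ⟨p, fun u hu v hv => hp u (hs hu) v (hs hv)⟩

lemma lab_succ (τ : Fin L → Fin n) (i : Fin L) (u v : Fin n) :
    lab G τ (i.val + 1) u = lab G τ (i.val + 1) v ↔
      lab G τ i.val u = lab G τ i.val v ∧ (G.Adj u (τ i) ↔ G.Adj v (τ i)) := by
  simp only [lab, funext_iff, eq_iff_iff]
  constructor
  · intro h
    refine ⟨fun l => ?_, ?_⟩
    · have := h l
      constructor
      · rintro ⟨h1, h2⟩; exact ⟨h1, (this.1 ⟨by omega, h2⟩).2⟩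
      · rintro ⟨h1, h2⟩; exact ⟨h1, (this.2 ⟨by omega, h2⟩).2⟩
    · simpa using h i
  · rintro ⟨h1, h2⟩ l
    rcases Nat.lt_trichotomy l.val i.val with hl | hl | hl
    · have := h1 l
      simp only [hl, true_and] at this
      simp [this]
    · have : l = i := Fin.ext hl
      subst this; simp [h2]
    · simp [show ¬ l.val < i.val + 1 by omega]

lemma labels_card {k t : ℕ} {f : Fin t → MvPolynomial (Fin k ⊕ Fin k) ℝ}
    {Φ : (Fin t → Bool) → Bool} {N : ℕ} [NeZero N] (τ : Fin L → Fin n) (a : ZMod N → Fin n)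
    (i : ℕ) (h : GoodSet G k t f Φ (Set.range τ ∪ Set.range a)) :
    (Finset.univ.image fun z => lab G τ i (a z)).card ≤
      L + (L + 1) ^ (∑ j, (f j).support.card) := by
  obtain ⟨p, hp⟩ := h
  let Pt : Fin t → Finset (Finset (Fin L)) := fun j =>
    (Finset.univ : Finset (Finset (Fin L))).filter fun s =>
      ∃ x : Fin k → ℝ, s = Finset.univ.filter fun l =>
        0 ≤ MvPolynomial.eval (Sum.elim x (p (τ l))) (f j)
  let dec : (Fin t → Finset (Fin L)) → (Fin L → Prop) := fun s l =>
    l.val < i ∧ Φ (fun j => decide (l ∈ s j)) = true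
  have hsub : (Finset.univ.image fun z => lab G τ i (a z)) ⊆
      (Finset.univ.image fun l => lab G τ i (τ l)) ∪ (Fintype.piFinset Pt).image dec := by
    intro c hc
    simp only [Finset.mem_image, Finset.mem_univ, true_and] at hc
    obtain ⟨z, rfl⟩ := hc
    rw [Finset.mem_union]
    by_cases hz : ∃ l, τ l = a z
    · left
      obtain ⟨l, hl⟩ := hz
      simp only [Finset.mem_image, Finset.mem_univ, true_and]
      exact ⟨l, by rw [hl]⟩
    · right
      push Not at hz
      rw [Finset.mem_image]
      refine ⟨fun j => Finset.univ.filter fun l =>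
        0 ≤ MvPolynomial.eval (Sum.elim (p (a z)) (p (τ l))) (f j), ?_, ?_⟩
      · rw [Fintype.mem_piFinset]
        intro j
        simp only [Pt, Finset.mem_filter, Finset.mem_univ, true_and]
        exact ⟨_, rfl⟩
      · ext l
        simp only [dec, lab, Finset.mem_filter, Finset.mem_univ, true_and]
        rw [hp (a z) (Or.inr ⟨z, rfl⟩) (τ l) (Or.inl ⟨l, rfl⟩) (hz l).symm]
  calc _ ≤ _ := Finset.card_le_card hsub
    _ ≤ _ := Finset.card_union_le _ _
    _ ≤ L + (L + 1) ^ (∑ j, (f j).support.card) := by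
      apply add_le_add
      · exact Finset.card_image_le.trans (by simp)
      · refine Finset.card_image_le.trans ?_
        rw [Fintype.card_piFinset, ← Finset.prod_pow_eq_pow_sum]
        apply Finset.prod_le_prod' 
        intro j _
        exact pattern_poly (f j) (fun l => p (τ l))

end labels
section events
variable {n : ℕ} [NeZero n] (G : SimpleGraph (Fin n)) {L N : ℕ} [NeZero N]

lemma lab_congr {τ τ' : Fin L → Fin n} {i : Fin L} (h : ∀ l, l < i → τ l = τ' l) :
    lab G τ i.val = lab G τ' i.val := by
  ext u l
  simp only [lab]
  constructor
  · rintro ⟨h1, h2⟩; exact ⟨h1, by rwa [← h l h1]⟩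
  · rintro ⟨h1, h2⟩; exact ⟨h1, by rwa [h l h1]⟩

def evP (i : Fin L) (ω : Fin L ⊕ ZMod N → Fin n) : Prop :=
  ¬ (G.Adj (ω (Sum.inr 0)) (ω (Sum.inl i)) ↔
    G.Adj (ω (Sum.inr (jump fun z => lab G (fun l => ω (Sum.inl l)) i.val (ω (Sum.inr z)))))
      (ω (Sum.inl i)))

lemma rot_inj (x : ZMod N) :
    Function.Injective (Sum.map (id : Fin L → Fin L) (fun z : ZMod N => x + z)) :=
  Function.Injective.sumMap Function.injective_id (add_right_injective x)

lemma evP_count (ω : Fin L ⊕ ZMod N → Fin n) :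
    (Finset.univ.filter fun q : Fin L × ZMod N =>
      evP G q.1 (ω ∘ Sum.map id (fun z => q.2 + z))).card ≤ 2 * (N * Nat.log 2 N) := by
  set τ : Fin L → Fin n := fun l => ω (Sum.inl l) with hτ
  set a : ZMod N → Fin n := fun z => ω (Sum.inr z) with ha
  let c : ℕ → ZMod N → (Fin L → Prop) := fun i z => lab G τ i (a z)
  have hc : ∀ (i : Fin L) x y, c (i.val + 1) x = c (i.val + 1) y ↔
      c i.val x = c i.val y ∧ (G.Adj (a x) (τ i) ↔ G.Adj (a y) (τ i)) := by
    intro i x y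
    exact lab_succ τ i (a x) (a y)
  have hev : ∀ i x, evP G i (ω ∘ Sum.map id (fun z => x + z)) ↔
      ¬ (G.Adj (a x) (τ i) ↔ G.Adj (a (nxt (c i.val) x)) (τ i)) := by
    intro i x
    simp [evP, nxt, c, hτ, ha]
  calc _ = ∑ i : Fin L, (Finset.univ.filter fun x : ZMod N =>
        evP G i (ω ∘ Sum.map id (fun z => x + z))).card := by
        simp only [Finset.card_filter]
        rw [Fintype.sum_prod_type]
    _ ≤ ∑ i : Fin L, 2 * (Finset.univ.filter fun x : ZMod N =>
        2 * cnt (c (i.val + 1)) x ≤ cnt (c i.val) x).card := by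
        apply Finset.sum_le_sum
        intro i _
        simp only [hev]
        exact switch_le (c i.val) (c (i.val + 1)) (fun x => G.Adj (a x) (τ i)) (hc i)
    _ = 2 * ∑ x : ZMod N, (Finset.univ.filter fun i : Fin L =>
        2 * cnt (c (i.val + 1)) x ≤ cnt (c i.val) x).card := by
        rw [← Finset.mul_sum]
        simp only [Finset.card_filter]
        rw [Finset.sum_comm]
    _ ≤ 2 * ∑ x : ZMod N, Nat.log 2 N := by
        gcongr with x
        have h1 := halving (fun i => cnt (c (min i L)) x) (fun i => cnt_pos _ _) (by
          intro i
          by_cases hi : i < L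
          · rw [min_eq_left hi.le, min_eq_left (by omega : i + 1 ≤ L)]
            unfold cnt
            apply Finset.card_le_card
            intro y hy
            simp only [Finset.mem_filter, Finset.mem_univ, true_and] at hy ⊢
            exact ((hc ⟨i, hi⟩ y x).1 hy).1
          · rw [min_eq_right (by omega), min_eq_right (by omega)]) L
        have h2 : Nat.log 2 (cnt (c (min 0 L)) x) ≤ Nat.log 2 N := Nat.log_mono_right (cnt_le _ _)
        have h3 : (Finset.univ.filter fun i : Fin L =>
            2 * cnt (c (i.val + 1)) x ≤ cnt (c i.val) x).card ≤
            ((Finset.range L).filter fun i =>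
              2 * cnt (c (min (i + 1) L)) x ≤ cnt (c (min i L)) x).card := by
          apply Finset.card_le_card_of_injOn Fin.val
          · intro i hi
            have := i.2
            simp only [Finset.coe_filter, Finset.mem_univ, true_and, Set.mem_setOf_eq,
              Finset.mem_range] at hi ⊢
            refine ⟨this, ?_⟩
            rwa [min_eq_left (by omega : i.val + 1 ≤ L), min_eq_left (by omega : i.val ≤ L)]
          · exact Fin.val_injective.injOn
        omega
    _ = _ := by rw [Finset.sum_const, Finset.card_univ, ZMod.card, smul_eq_mul]

lemma evP_sum : ∑ i : Fin L, Pr (Fin L ⊕ ZMod N) (Fin n) (evP G i) ≤ 2 * Nat.log 2 N := by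
  have h := Pr_sum_le (ι := Fin L ⊕ ZMod N) (fun (q : Fin L × ZMod N) => evP G q.1)
    (fun q => Sum.map id (fun z => q.2 + z)) (fun q => rot_inj q.2) (2 * (N * Nat.log 2 N) : ℕ)
    (fun ω => by exact_mod_cast evP_count G ω)
  rw [Fintype.sum_prod_type] at h
  simp only [Finset.sum_const, Finset.card_univ, ZMod.card, nsmul_eq_mul] at h
  rw [← Finset.mul_sum] at h
  have hN : (0 : ℝ) < N := by exact_mod_cast Nat.pos_of_ne_zero (NeZero.ne N)
  push_cast at h
  nlinarith

lemma evP_exists (hL : 0 < L) :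
    ∃ i : Fin L, Pr (Fin L ⊕ ZMod N) (Fin n) (evP G i) ≤ 2 * Nat.log 2 N / L := by
  by_contra hcon
  push Not at hcon
  haveI : Nonempty (Fin L) := ⟨⟨0, hL⟩⟩
  have h1 := Finset.sum_lt_sum_of_nonempty (s := (Finset.univ : Finset (Fin L)))
    Finset.univ_nonempty (fun i _ => hcon i)
  have h2 := evP_sum (N := N) (L := L) G
  rw [Finset.sum_const, Finset.card_univ, Fintype.card_fin, nsmul_eq_mul] at h1
  have : (0 : ℝ) < L := by exact_mod_cast hL
  rw [mul_div_cancel₀ _ this.ne'] at h1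
  linarith

def evR' (i : Fin L) (ω : Fin L ⊕ (ZMod N ⊕ ZMod N) → Fin n) : Prop :=
  ¬ (G.Adj (ω (Sum.inr (Sum.inl 0))) (ω (Sum.inr (Sum.inr 0))) ↔
    G.Adj (ω (Sum.inr (Sum.inl 0)))
      (ω (Sum.inr (Sum.inr (jump fun z =>
        lab G (fun l => ω (Sum.inl l)) i.val (ω (Sum.inr (Sum.inr z))))))))

def evR (i : Fin L) (ω : Fin L ⊕ (ZMod N ⊕ ZMod N) → Fin n) : Prop :=
  ¬ (G.Adj (ω (Sum.inr (Sum.inl (jump fun z =>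
        lab G (fun l => ω (Sum.inl l)) i.val (ω (Sum.inr (Sum.inl z)))))))
      (ω (Sum.inr (Sum.inr 0))) ↔
    G.Adj (ω (Sum.inr (Sum.inl (jump fun z =>
        lab G (fun l => ω (Sum.inl l)) i.val (ω (Sum.inr (Sum.inl z)))))))
      (ω (Sum.inr (Sum.inr (jump fun z =>
        lab G (fun l => ω (Sum.inl l)) i.val (ω (Sum.inr (Sum.inr z))))))))

lemma evR'_le (i : Fin L) :
    Pr (Fin L ⊕ (ZMod N ⊕ ZMod N)) (Fin n) (evR' G i) = Pr (Fin L ⊕ ZMod N) (Fin n) (evP G i) := by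
  let e : Fin L ⊕ ZMod N → Fin L ⊕ (ZMod N ⊕ ZMod N) :=
    Sum.elim (fun l => if l = i then Sum.inr (Sum.inl 0) else Sum.inl l)
      (fun z => Sum.inr (Sum.inr z))
  have he : Function.Injective e := by
    rintro (l | z) (l' | z') h
    · simp only [e, Sum.elim_inl] at h
      split_ifs at h with h1 h2 h2
      · rw [h1, h2]
      · simpa using h
    · simp only [e, Sum.elim_inl, Sum.elim_inr] at h
      split_ifs at h
      simp at h
    · simp only [e, Sum.elim_inl, Sum.elim_inr] at h
      split_ifs at h
      simp at h
    · simpa [e] using h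
  rw [← Pr_marg e he]
  congr 1
  ext ω
  have hl : lab G (fun l => (ω ∘ e) (Sum.inl l)) i.val = lab G (fun l => ω (Sum.inl l)) i.val := by
    apply lab_congr
    intro l hl
    simp [e, hl.ne]
  unfold evR' evP
  rw [hl]
  simp [e, G.adj_comm]

lemma evR_le (i : Fin L) :
    Pr (Fin L ⊕ (ZMod N ⊕ ZMod N)) (Fin n) (evR G i) ≤ Pr (Fin L ⊕ ZMod N) (Fin n) (evP G i) := by
  rw [← evR'_le]
  have h := Pr_sum_le_sum (ι := Fin L ⊕ (ZMod N ⊕ ZMod N)) (W := Fin n) (X := ZMod N)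
    (fun _ => evR G i) (fun _ => evR' G i)
    (fun x => Sum.map id (Sum.map (fun z => x + z) id))
    (fun x => Function.Injective.sumMap Function.injective_id
      (Function.Injective.sumMap (add_right_injective x) Function.injective_id)) ?_
  · simp only [Finset.sum_const, Finset.card_univ, ZMod.card, nsmul_eq_mul] at h
    have hN : (0 : ℝ) < N := by exact_mod_cast Nat.pos_of_ne_zero (NeZero.ne N)
    exact le_of_mul_le_mul_left h hN
  · intro ω
    apply Finset.card_le_card_of_injOn
      (nxt fun z => lab G (fun l => ω (Sum.inl l)) i.val (ω (Sum.inr (Sum.inl z))))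
    · intro x hx
      simp only [Finset.coe_filter, Finset.mem_univ, true_and, Set.mem_setOf_eq] at hx ⊢
      simpa [evR, evR', nxt] using hx
    · exact (nxt_inj _).injOn

variable (k t : ℕ) (f : Fin t → MvPolynomial (Fin k ⊕ Fin k) ℝ) (Φ : (Fin t → Bool) → Bool)

def evQ (i : Fin L) (ω : Fin L ⊕ ZMod N → Fin n) : Prop :=
  GoodSet G k t f Φ (Set.range (fun l => ω (Sum.inl l)) ∪ Set.range (fun z => ω (Sum.inr z))) ∧
    (jump fun z => lab G (fun l => ω (Sum.inl l)) i.val (ω (Sum.inr z))) = 0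

lemma evQ_le (i : Fin L) :
    Pr (Fin L ⊕ ZMod N) (Fin n) (evQ G k t f Φ i) ≤
      ((L + (L + 1) ^ (∑ j, (f j).support.card) : ℕ) : ℝ) / N := by
  have hN : (0 : ℝ) < N := by exact_mod_cast Nat.pos_of_ne_zero (NeZero.ne N)
  have h := Pr_sum_le (ι := Fin L ⊕ ZMod N) (W := Fin n) (X := ZMod N)
    (fun _ => evQ G k t f Φ i) (fun x => Sum.map id (fun z => x + z)) rot_inj
    ((L + (L + 1) ^ (∑ j, (f j).support.card) : ℕ) : ℝ) ?_
  · simp only [Finset.sum_const, Finset.card_univ, ZMod.card, nsmul_eq_mul] at h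
    rw [le_div_iff₀ hN]
    linarith
  · intro ω
    norm_cast
    by_cases hg : GoodSet G k t f Φ
      (Set.range (fun l => ω (Sum.inl l)) ∪ Set.range (fun z => ω (Sum.inr z)))
    · refine le_trans ?_ (labels_card (fun l => ω (Sum.inl l)) (fun z => ω (Sum.inr z)) i.val hg)
      refine le_trans ?_ (card_self_le _)
      apply Finset.card_le_card
      intro x hx
      simp only [Finset.mem_filter, Finset.mem_univ, true_and] at hx ⊢
      have := hx.2
      simp only [Function.comp_apply, Sum.map_inl, Sum.map_inr, id] at this
      simp [nxt, this]
    · have : (Finset.univ.filter fun x : ZMod N =>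
          evQ G k t f Φ i (ω ∘ Sum.map id (fun z => x + z))) = ∅ := by
        apply Finset.filter_eq_empty_iff.2
        intro x _ hx
        apply hg
        refine hx.1.mono ?_
        rintro w (⟨l, rfl⟩ | ⟨z, rfl⟩)
        · left; exact ⟨l, rfl⟩
        · right; exact ⟨z - x, by simp⟩
      rw [this]
      simp

end events
section total
variable {n : ℕ} [NeZero n] (G : SimpleGraph (Fin n)) {L N B J : ℕ} [NeZero N]

abbrev Idx (L N B J : ℕ) : Type := (Fin L ⊕ (Fin B × ZMod N)) ⊕ Fin J

def tauF (ω : Idx L N B J → Fin n) (l : Fin L) : Fin n := ω (Sum.inl (Sum.inl l))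
def alF (ω : Idx L N B J → Fin n) (b : Fin B) (z : ZMod N) : Fin n := ω (Sum.inl (Sum.inr (b, z)))

def setS (ω : Idx L N B J → Fin n) (j : ℕ) : Set (Fin n) :=
  {w | (∃ l, tauF ω l = w) ∨ (∃ b z, alF ω b z = w) ∨ (∃ r : Fin J, r.val < j ∧ ω (Sum.inr r) = w)}

/-- index (in block `b`) of the representative of `w` -/
def rep (i : Fin L) (ω : Idx L N B J → Fin n) (b : Fin B) (w : Fin n) : ZMod N :=
  jump fun z => lab G (tauF ω) i.val (if z = 0 then w else alF ω b z)

def Mism (i : Fin L) (ω : Idx L N B J → Fin n) (b b' : Fin B) (u v : Fin n) : Prop :=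
  u ≠ v ∧ ¬ (alF ω b (rep G i ω b u) ≠ alF ω b' (rep G i ω b' v) ∧
    (G.Adj u v ↔ G.Adj (alF ω b (rep G i ω b u)) (alF ω b' (rep G i ω b' v))))

variable (k t : ℕ) (f : Fin t → MvPolynomial (Fin k ⊕ Fin k) ℝ) (Φ : (Fin t → Bool) → Bool)

def evA (j : Fin J) (ω : Idx L N B J → Fin n) : Prop :=
  GoodSet G k t f Φ (setS ω j.val) ∧ ¬ GoodSet G k t f Φ (setS ω (j.val + 1))

lemma setS_mono (ω : Idx L N B J → Fin n) {j j' : ℕ} (h : j ≤ j') : setS ω j ⊆ setS ω j' := by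
  rintro w (h1 | h1 | ⟨r, hr, h1⟩)
  · exact Or.inl h1
  · exact Or.inr (Or.inl h1)
  · exact Or.inr (Or.inr ⟨r, by omega, h1⟩)

lemma evA_exists (hJ : 0 < J) :
    ∃ j : Fin J, Pr (Idx L N B J) (Fin n) (evA G k t f Φ j) ≤ 1 / J := by
  by_contra hcon
  push Not at hcon
  haveI : Nonempty (Fin J) := ⟨⟨0, hJ⟩⟩
  have h1 := Finset.sum_lt_sum_of_nonempty (s := (Finset.univ : Finset (Fin J)))
    Finset.univ_nonempty (fun i _ => hcon i)
  have h2 := Pr_sum_le (ι := Idx L N B J) (W := Fin n) (evA G k t f Φ) (fun _ => id)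
    (fun _ => Function.injective_id) 1 ?_
  · rw [Finset.sum_const, Finset.card_univ, Fintype.card_fin, nsmul_eq_mul] at h1
    have : (0 : ℝ) < J := by exact_mod_cast hJ
    rw [mul_div_cancel₀ _ this.ne'] at h1
    linarith
  · intro ω
    norm_cast
    rw [Finset.card_le_one]
    intro j hj j' hj'
    have hj := (Finset.mem_filter.1 hj).2
    have hj' := (Finset.mem_filter.1 hj').2
    simp only [evA, Function.comp_id] at hj hj'
    by_contra hne
    rcases lt_or_gt_of_ne hne with h | h
    · exact hj.2 (hj'.1.mono (setS_mono ω h))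
    · exact hj'.2 (hj.1.mono (setS_mono ω h))

lemma nomate_le (i : Fin L) (j : Fin J) (b : Fin B) (c : Bool) :
    Pr (Idx L N B J ⊕ Bool) (Fin n) (fun ω =>
      GoodSet G k t f Φ (setS (fun x => ω (Sum.inl x)) j.val) ∧
      rep G i (fun x => ω (Sum.inl x)) b (ω (Sum.inr c)) = 0) ≤
    Pr (Idx L N B J) (Fin n) (evA G k t f Φ j) +
      Pr (Fin L ⊕ ZMod N) (Fin n) (evQ G k t f Φ i) := by
  let e1 : Idx L N B J → Idx L N B J ⊕ Bool :=
    Sum.elim (fun x => Sum.inl (Sum.inl x)) (fun r => if r = j then Sum.inr c else Sum.inl (Sum.inr r))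
  have he1 : Function.Injective e1 := by
    rintro (l | z) (l' | z') h
    · simpa [e1] using h
    · simp only [e1, Sum.elim_inl, Sum.elim_inr] at h
      split_ifs at h
      simp at h
    · simp only [e1, Sum.elim_inl, Sum.elim_inr] at h
      split_ifs at h
      simp at h
    · simp only [e1, Sum.elim_inr] at h
      split_ifs at h with h1 h2 h2
      · rw [h1, h2]
      · simpa using h
  let e2 : Fin L ⊕ ZMod N → Idx L N B J ⊕ Bool :=
    Sum.elim (fun l => Sum.inl (Sum.inl (Sum.inl l)))
      (fun z => if z = 0 then Sum.inr c else Sum.inl (Sum.inl (Sum.inr (b, z))))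
  have he2 : Function.Injective e2 := by
    rintro (l | z) (l' | z') h
    · simpa [e2] using h
    · simp only [e2, Sum.elim_inl, Sum.elim_inr] at h
      split_ifs at h
      simp at h
    · simp only [e2, Sum.elim_inl, Sum.elim_inr] at h
      split_ifs at h
      simp at h
    · simp only [e2, Sum.elim_inr] at h
      split_ifs at h with h1 h2 h2
      · rw [h1, h2]
      · simpa using h
  rw [← Pr_marg e1 he1, ← Pr_marg e2 he2]
  refine le_trans (Pr_mono ?_) (Pr_or_le _ _)
  rintro ω ⟨hg, hr⟩
  by_cases hg2 : GoodSet G k t f Φ (insert (ω (Sum.inr c)) (setS (fun x => ω (Sum.inl x)) j.val))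
  · right
    refine ⟨hg2.mono ?_, ?_⟩
    · rintro w (⟨l, rfl⟩ | ⟨z, rfl⟩)
      · right; left; exact ⟨l, rfl⟩
      · by_cases hz : z = 0
        · left; simp [e2, hz]
        · right; right; left; exact ⟨b, z, by simp [e2, hz, alF]⟩
    · rw [← hr]
      unfold rep
      congr 1
      ext z : 1
      congr 1
      simp only [Function.comp_apply, e2, Sum.elim_inr, alF]
      split_ifs <;> rfl
  · left
    refine ⟨hg.mono ?_, fun h => hg2 (h.mono ?_)⟩
    · rintro w (⟨l, rfl⟩ | ⟨b, z, rfl⟩ | ⟨r, hr, rfl⟩)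
      · left; exact ⟨l, rfl⟩
      · right; left; exact ⟨b, z, rfl⟩
      · right; right
        refine ⟨r, hr, ?_⟩
        have : r ≠ j := by rintro rfl; exact lt_irrefl _ hr
        simp [e1, this]
    · rintro w (rfl | ⟨l, rfl⟩ | ⟨b, z, rfl⟩ | ⟨r, hr, rfl⟩)
      · right; right; exact ⟨j, by omega, by simp [e1]⟩
      · left; exact ⟨l, rfl⟩
      · right; left; exact ⟨b, z, rfl⟩
      · right; right
        refine ⟨r, by omega, ?_⟩
        have : r ≠ j := by rintro rfl; exact lt_irrefl _ hr
        simp [e1, this]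

lemma bad_le (i : Fin L) (j : Fin J) (b b' : Fin B) (hb : b ≠ b') :
    Pr (Idx L N B J ⊕ Bool) (Fin n) (fun ω =>
      GoodSet G k t f Φ (setS (fun x => ω (Sum.inl x)) j.val) ∧
      Mism G i (fun x => ω (Sum.inl x)) b b' (ω (Sum.inr false)) (ω (Sum.inr true))) ≤
    (N : ℝ) ^ 2 / n + 2 * (Pr (Idx L N B J) (Fin n) (evA G k t f Φ j) +
      Pr (Fin L ⊕ ZMod N) (Fin n) (evQ G k t f Φ i)) +
      2 * Pr (Fin L ⊕ ZMod N) (Fin n) (evP G i) := by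
  -- collision
  have hcol : Pr (Idx L N B J ⊕ Bool) (Fin n) (fun ω => ∃ q : ZMod N × ZMod N,
      ω (Sum.inl (Sum.inl (Sum.inr (b, q.1)))) = ω (Sum.inl (Sum.inl (Sum.inr (b', q.2))))) ≤
      (N : ℝ) ^ 2 / n := by
    refine (Pr_exists_le _).trans ?_
    have : ∀ q : ZMod N × ZMod N, Pr (Idx L N B J ⊕ Bool) (Fin n) (fun ω =>
        ω (Sum.inl (Sum.inl (Sum.inr (b, q.1)))) = ω (Sum.inl (Sum.inl (Sum.inr (b', q.2))))) =
        1 / (Fintype.card (Fin n) : ℝ) := by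
      intro q
      apply Pr_collision
      simp [hb]
    rw [Finset.sum_congr rfl (fun q _ => this q)]
    simp only [Finset.sum_const, Finset.card_univ, Fintype.card_prod, ZMod.card, nsmul_eq_mul,
      Fintype.card_fin]
    push_cast
    apply le_of_eq
    ring
  have hn1 := nomate_le (L := L) (N := N) (B := B) G k t f Φ i j b false
  have hn2 := nomate_le (L := L) (N := N) (B := B) G k t f Φ i j b' true
  let e1 : Fin L ⊕ ZMod N → Idx L N B J ⊕ Bool :=
    Sum.elim (fun l => if l = i then Sum.inr true else Sum.inl (Sum.inl (Sum.inl l)))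
      (fun z => if z = 0 then Sum.inr false else Sum.inl (Sum.inl (Sum.inr (b, z))))
  have he1 : Function.Injective e1 := by
    rintro (l | z) (l' | z') h
    all_goals
      simp only [e1, Sum.elim_inl, Sum.elim_inr] at h
      split_ifs at h <;> simp_all
  let e2 : Fin L ⊕ (ZMod N ⊕ ZMod N) → Idx L N B J ⊕ Bool :=
    Sum.elim (fun l => Sum.inl (Sum.inl (Sum.inl l)))
      (Sum.elim (fun z => if z = 0 then Sum.inr false else Sum.inl (Sum.inl (Sum.inr (b, z))))
        (fun z => if z = 0 then Sum.inr true else Sum.inl (Sum.inl (Sum.inr (b', z)))))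
  have he2 : Function.Injective e2 := by
    rintro (l | z | z) (l' | z' | z') h
    all_goals
      simp only [e2, Sum.elim_inl, Sum.elim_inr] at h
      first
        | (split_ifs at h <;> simp_all)
        | simp_all
  have hE1 : Pr (Idx L N B J ⊕ Bool) (Fin n) (fun ω => evP G i (ω ∘ e1)) = Pr (Fin L ⊕ ZMod N) (Fin n) (evP G i) :=
    Pr_marg e1 he1 _
  have hE2 : Pr (Idx L N B J ⊕ Bool) (Fin n) (fun ω => evR G i (ω ∘ e2)) ≤ Pr (Fin L ⊕ ZMod N) (Fin n) (evP G i) :=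
    (Pr_marg e2 he2 _).trans_le (evR_le G i)
  have hmain := Pr_mono (κ := Idx L N B J ⊕ Bool) (W := Fin n) (p := fun ω =>
      GoodSet G k t f Φ (setS (fun x => ω (Sum.inl x)) j.val) ∧
      Mism G i (fun x => ω (Sum.inl x)) b b' (ω (Sum.inr false)) (ω (Sum.inr true)))
    (q := fun ω => (∃ q : ZMod N × ZMod N,
      ω (Sum.inl (Sum.inl (Sum.inr (b, q.1)))) = ω (Sum.inl (Sum.inl (Sum.inr (b', q.2))))) ∨
      ((GoodSet G k t f Φ (setS (fun x => ω (Sum.inl x)) j.val) ∧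
      rep G i (fun x => ω (Sum.inl x)) b (ω (Sum.inr false)) = 0) ∨
      ((GoodSet G k t f Φ (setS (fun x => ω (Sum.inl x)) j.val) ∧
      rep G i (fun x => ω (Sum.inl x)) b' (ω (Sum.inr true)) = 0) ∨
      (evP G i (ω ∘ e1) ∨ evR G i (ω ∘ e2))))) ?_
  · have o1 := hmain.trans (Pr_or_le _ _)
    have o2 := o1.trans (add_le_add_right (Pr_or_le _ _) _)
    have o3 := o2.trans (add_le_add_right (add_le_add_right (Pr_or_le _ _) _) _)
    have o4 := o3.trans (add_le_add_right (add_le_add_right (add_le_add_right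
      (Pr_or_le _ _) _) _) _)
    linarith
  · rintro ω ⟨hg, hne, hm⟩
    by_contra hcon
    push Not at hcon
    obtain ⟨hc, h1, h2, h3, h4⟩ := hcon
    apply hm
    refine ⟨hc (_, _), ?_⟩
    have r1 := h1 hg
    have r2 := h2 hg
    set ω' : Idx L N B J → Fin n := fun x => ω (Sum.inl x) with hω'
    have z1 : (jump fun z => lab G (fun l => (ω ∘ e1) (Sum.inl l)) i.val ((ω ∘ e1) (Sum.inr z))) =
        rep G i ω' b (ω (Sum.inr false)) := by
      unfold rep
      have hl : lab G (fun l => (ω ∘ e1) (Sum.inl l)) i.val = lab G (tauF ω') i.val := by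
        apply lab_congr
        intro l hl
        simp [e1, hl.ne, tauF, hω']
      rw [hl]
      congr 1
      ext z : 1
      congr 1
      simp only [Function.comp_apply, e1, Sum.elim_inr, alF]
      split_ifs <;> rfl
    have z2 : (jump fun z => lab G (fun l => (ω ∘ e2) (Sum.inl l)) i.val
        ((ω ∘ e2) (Sum.inr (Sum.inl z)))) = rep G i ω' b (ω (Sum.inr false)) := by
      unfold rep
      congr 1
      ext z : 1
      congr 1
      simp only [Function.comp_apply, e2, Sum.elim_inr, Sum.elim_inl, alF]
      split_ifs <;> rfl
    have z3 : (jump fun z => lab G (fun l => (ω ∘ e2) (Sum.inl l)) i.val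
        ((ω ∘ e2) (Sum.inr (Sum.inr z)))) = rep G i ω' b' (ω (Sum.inr true)) := by
      unfold rep
      congr 1
      ext z : 1
      congr 1
      simp only [Function.comp_apply, e2, Sum.elim_inr, alF]
      split_ifs <;> rfl
    unfold evP at h3
    unfold evR at h4
    rw [z1] at h3
    rw [z2, z3] at h4
    rw [not_not] at h3 h4
    simp only [Function.comp_apply, e1, e2, Sum.elim_inr, Sum.elim_inl, if_true, r1, r2,
      if_false] at h3 h4
    exact h3.trans h4

end total
section blow
variable {n : ℕ} [NeZero n] (G : SimpleGraph (Fin n)) {L N B J : ℕ} [NeZero N]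
variable (k t : ℕ) (f : Fin t → MvPolynomial (Fin k ⊕ Fin k) ℝ) (Φ : (Fin t → Bool) → Bool)

lemma blowup {S : Set (Fin n)} (hS : GoodSet G k t f Φ S) (φ : Fin n → Fin n) (hφ : ∀ v, φ v ∈ S)
    {ε : ℝ} (hfar : Far (SemiAlgebraicProp k t f Φ) G ε) :
    ε * (n : ℝ) ^ 2 ≤ ∑ x : Fin n × Fin n, if x.1 ≠ x.2 ∧
      ¬ (φ x.1 ≠ φ x.2 ∧ (G.Adj x.1 x.2 ↔ G.Adj (φ x.1) (φ x.2))) then (1 : ℝ) else 0 := by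
  obtain ⟨p, hp⟩ := hS
  let H : SimpleGraph (Fin n) :=
    { Adj := fun u v => u ≠ v ∧
        Φ (fun i => decide (0 ≤ MvPolynomial.eval (Sum.elim (p (φ u)) (p (φ v))) (f i))) = true
      symm := ⟨by
        rintro u v ⟨h1, h2⟩
        refine ⟨h1.symm, ?_⟩
        by_cases h : φ u = φ v
        · rw [h] at h2 ⊢; exact h2
        · rw [← hp _ (hφ v) _ (hφ u) (Ne.symm h)]
          rw [← hp _ (hφ u) _ (hφ v) h] at h2
          exact h2.symm⟩
      loopless := ⟨fun u h => h.1 rfl⟩ }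
  have hH : H ∈ SemiAlgebraicProp k t f Φ n := ⟨fun v => p (φ v), fun u v huv => by simp [H, huv]⟩
  refine (hfar H hH).trans ?_
  rw [Finset.sum_boole]
  norm_cast
  rw [← Set.ncard_coe_finset]
  unfold editDist
  refine le_trans (Set.ncard_le_ncard ?_ (Set.toFinite _))
    (Set.ncard_image_le (f := fun x : Fin n × Fin n => s(x.1, x.2)) (Set.toFinite _))
  intro e
  induction e with
  | _ u v =>
    intro h
    refine ⟨(u, v), ?_, rfl⟩
    simp only [SimpleGraph.mem_edgeSet, Set.mem_ofPred_eq] at h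
    have huv : u ≠ v := by
      rintro rfl
      simp at h
    simp only [Finset.coe_filter, Finset.mem_univ, true_and, Set.mem_ofPred_eq]
    refine ⟨huv, ?_⟩
    rintro ⟨h1, h2⟩
    have h3 := hp _ (hφ u) _ (hφ v) h1
    have h4 : H.Adj u v ↔ G.Adj u v := by
      rw [h2, h3]
      simp [H, huv]
    rw [h4] at h
    tauto

lemma avg (i : Fin L) (j : ℕ) (hB : 0 < B) (ω : Idx L N B J → Fin n)
    (hS : GoodSet G k t f Φ (setS ω j))
    {ε : ℝ} (hfar : Far (SemiAlgebraicProp k t f Φ) G ε) :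
    ε * (n : ℝ) ^ 2 * (B : ℝ) ^ 2 ≤ ∑ x : Fin n × Fin n, ∑ g : Bool → Fin B,
      if Mism G i ω (g false) (g true) x.1 x.2 then (1 : ℝ) else 0 := by
  haveI : Nonempty (Fin B) := ⟨⟨0, hB⟩⟩
  have h1 : ∀ β : Fin n → Fin B, ε * (n : ℝ) ^ 2 ≤ ∑ x : Fin n × Fin n,
      if Mism G i ω (β x.1) (β x.2) x.1 x.2 then (1 : ℝ) else 0 := fun β =>
    (blowup G k t f Φ hS (fun v => alF ω (β v) (rep G i ω (β v) v))
      (fun v => Or.inr (Or.inl ⟨_, _, rfl⟩)) hfar).trans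
      (le_of_eq (Finset.sum_congr rfl fun x _ => if_congr Iff.rfl rfl rfl))
  have h2 := Finset.sum_le_sum (s := Finset.univ) fun β _ => h1 β
  rw [Finset.sum_const, Finset.card_univ, nsmul_eq_mul, Finset.sum_comm] at h2
  have hc : (0 : ℝ) < (Fintype.card (Fin n → Fin B) : ℝ) := by exact_mod_cast Fintype.card_pos
  have hc2 : (0 : ℝ) < (Fintype.card (Bool → Fin B) : ℝ) := by exact_mod_cast Fintype.card_pos
  have hBB : (Fintype.card (Bool → Fin B) : ℝ) = (B : ℝ) ^ 2 := by simp
  have h3 : ∀ x : Fin n × Fin n,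
      (∑ β : Fin n → Fin B, if Mism G i ω (β x.1) (β x.2) x.1 x.2 then (1 : ℝ) else 0) *
        (Fintype.card (Bool → Fin B) : ℝ) =
      (Fintype.card (Fin n → Fin B) : ℝ) * ∑ g : Bool → Fin B,
        if Mism G i ω (g false) (g true) x.1 x.2 then (1 : ℝ) else 0 := by
    intro x
    by_cases hx : x.1 = x.2
    · simp [Mism, hx]
    · have := Pr_marg (W := Fin B) (fun b : Bool => if b then x.2 else x.1) (by
        intro a b h
        cases a <;> cases b <;> simp_all) (fun g => Mism G i ω (g false) (g true) x.1 x.2)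
      rw [Pr_eq, Pr_eq, div_eq_div_iff hc.ne' hc2.ne'] at this
      rw [Finset.sum_boole, Finset.sum_boole, mul_comm (Fintype.card (Fin n → Fin B) : ℝ)]
      simp only [Function.comp_apply, if_true, Bool.false_eq_true, if_false] at this
      convert this
  rw [← hBB]
  refine le_of_mul_le_mul_left ?_ hc
  rw [Finset.mul_sum, ← Finset.sum_congr rfl fun x _ => h3 x, ← Finset.sum_mul, ← mul_assoc]
  exact mul_le_mul_of_nonneg_right h2 hc2.le

lemma main_avg (i : Fin L) (j : ℕ) (hB : 0 < B) {ε η : ℝ} (hη0 : 0 ≤ η)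
    (hfar : Far (SemiAlgebraicProp k t f Φ) G ε)
    (hη : ∀ b b' : Fin B, b ≠ b' → Pr (Idx L N B J ⊕ Bool) (Fin n) (fun ω =>
      GoodSet G k t f Φ (setS (fun x => ω (Sum.inl x)) j) ∧
      Mism G i (fun x => ω (Sum.inl x)) b b' (ω (Sum.inr false)) (ω (Sum.inr true))) ≤ η) :
    ε * Pr (Idx L N B J) (Fin n) (fun ω => GoodSet G k t f Φ (setS ω j)) ≤ 1 / B + η := by
  have hn : (0 : ℝ) < n := by exact_mod_cast Nat.pos_of_ne_zero (NeZero.ne n)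
  have hBr : (0 : ℝ) < B := by exact_mod_cast hB
  have hC : (0 : ℝ) < (Fintype.card (Idx L N B J → Fin n) : ℝ) := by exact_mod_cast Fintype.card_pos
  set q : (Bool → Fin B) → ℝ := fun g => Pr (Idx L N B J ⊕ Bool) (Fin n) (fun ω =>
      GoodSet G k t f Φ (setS (fun x => ω (Sum.inl x)) j) ∧
      Mism G i (fun x => ω (Sum.inl x)) (g false) (g true) (ω (Sum.inr false)) (ω (Sum.inr true)))
    with hq
  have h1 : ∀ g, q g * ((Fintype.card (Idx L N B J → Fin n) : ℝ) * (n : ℝ) ^ 2) =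
      ∑ ω : Idx L N B J → Fin n, ∑ x : Fin n × Fin n,
        if GoodSet G k t f Φ (setS ω j) ∧ Mism G i ω (g false) (g true) x.1 x.2
          then (1 : ℝ) else 0 := by
    intro g
    have := Pr_sum_bool (ι := Idx L N B J) (W := Fin n) (fun ω =>
      GoodSet G k t f Φ (setS (fun x => ω (Sum.inl x)) j) ∧
      Mism G i (fun x => ω (Sum.inl x)) (g false) (g true) (ω (Sum.inr false)) (ω (Sum.inr true)))
    rw [Fintype.card_fin] at this
    rw [hq]
    refine Eq.trans (by congr!) (this.trans ?_)
    refine Finset.sum_congr (by ext; simp) fun ω _ => ?_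
    simp
  have h2 : ∀ ω : Idx L N B J → Fin n,
      (if GoodSet G k t f Φ (setS ω j) then (1 : ℝ) else 0) * (ε * (n : ℝ) ^ 2 * (B : ℝ) ^ 2) ≤
      ∑ g : Bool → Fin B, ∑ x : Fin n × Fin n,
        if GoodSet G k t f Φ (setS ω j) ∧ Mism G i ω (g false) (g true) x.1 x.2
          then (1 : ℝ) else 0 := by
    intro ω
    by_cases h : GoodSet G k t f Φ (setS ω j)
    · have := avg G k t f Φ i j hB ω h hfar
      rw [Finset.sum_comm] at this
      simpa [h] using this
    · simp [h]
  have h3 := Finset.sum_le_sum (s := Finset.univ) fun ω _ => h2 ω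
  rw [← Finset.sum_mul, Finset.sum_comm, ← Finset.sum_congr rfl fun g _ => h1 g,
    ← Finset.sum_mul, Finset.sum_boole] at h3
  have h4 : Pr (Idx L N B J) (Fin n) (fun ω => GoodSet G k t f Φ (setS ω j)) *
      (Fintype.card (Idx L N B J → Fin n) : ℝ) =
      ((Finset.univ.filter fun ω : Idx L N B J → Fin n =>
        GoodSet G k t f Φ (setS ω j)).card : ℝ) := by
    rw [Pr_eq, div_mul_cancel₀ _ hC.ne']
  rw [← h4] at h3
  have h5 : ∑ g, q g ≤ B + (B : ℝ) ^ 2 * η := by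
    have : ∀ g : Bool → Fin B, q g ≤ (if g true = g false then (1 : ℝ) else 0) + η := by
      intro g
      split_ifs with h
      · have : q g ≤ 1 := Pr_le_one _
        linarith
      · rw [zero_add]; exact hη _ _ (fun h' => h h'.symm)
    refine (Finset.sum_le_sum fun g _ => this g).trans ?_
    rw [Finset.sum_add_distrib, Finset.sum_const, Finset.card_univ, nsmul_eq_mul, Finset.sum_boole]
    haveI : Nonempty (Fin B) := ⟨⟨0, hB⟩⟩
    have hcol := Pr_collision (W := Fin B) (ι := Bool) (i := true) (j := false) (by simp)
    rw [Pr_eq, div_eq_iff (by positivity)] at hcol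
    rw [hcol]
    simp
    field_simp
    rfl
  have h6 : (ε * Pr (Idx L N B J) (Fin n) (fun ω => GoodSet G k t f Φ (setS ω j))) *
      (B : ℝ) ^ 2 ≤ ∑ g, q g := by
    have hpos : 0 < (Fintype.card (Idx L N B J → Fin n) : ℝ) * (n : ℝ) ^ 2 := by positivity
    refine le_of_mul_le_mul_right ?_ hpos
    linarith
  have h7 := h6.trans h5
  have h8 : (1 / (B : ℝ) + η) * (B : ℝ) ^ 2 = B + (B : ℝ) ^ 2 * η := by field_simp
  rw [← h8] at h7
  exact le_of_mul_le_mul_right h7 (by positivity)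

end blow
section sampling

lemma embed_count {n : ℕ} {ι : Type} [Fintype ι] (A : Set (Fin n) → Prop)
    (hA : ∀ S S' : Set (Fin n), S ⊆ S' → A S' → A S) (q : ℕ) :
    ((((Finset.univ : Finset (Fin n)).powersetCard q).filter fun Q : Finset (Fin n) => A (↑Q : Set (Fin n))).card) *
      q.descFactorial (Fintype.card ι) ≤
    (Finset.univ.filter fun e : ι ↪ Fin n => A (Set.range e)).card *
      (n - Fintype.card ι).choose (q - Fintype.card ι) := by
  have h := Finset.sum_card_bipartiteAbove_eq_sum_card_bipartiteBelow
    (s := ((Finset.univ : Finset (Fin n)).powersetCard q).filter fun Q : Finset (Fin n) => A (↑Q : Set (Fin n)))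
    (t := Finset.univ.filter fun e : ι ↪ Fin n => A (Set.range e))
    (fun (Q : Finset (Fin n)) (e : ι ↪ Fin n) => Set.range e ⊆ (↑Q : Set (Fin n)))
  have h1 := Finset.card_nsmul_le_sum
    (((Finset.univ : Finset (Fin n)).powersetCard q).filter fun Q : Finset (Fin n) => A (↑Q : Set (Fin n)))
    (fun Q => ((Finset.univ.filter fun e : ι ↪ Fin n => A (Set.range e)).bipartiteAbove
      (fun (Q : Finset (Fin n)) (e : ι ↪ Fin n) => Set.range e ⊆ (↑Q : Set (Fin n))) Q).card) (q.descFactorial (Fintype.card ι)) ?_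
  · have h2 := Finset.sum_le_card_nsmul
      (Finset.univ.filter fun e : ι ↪ Fin n => A (Set.range e))
      (fun e => ((((Finset.univ : Finset (Fin n)).powersetCard q).filter fun Q : Finset (Fin n) => A (↑Q : Set (Fin n))).bipartiteBelow
        (fun (Q : Finset (Fin n)) (e : ι ↪ Fin n) => Set.range e ⊆ (↑Q : Set (Fin n))) e).card)
      ((n - Fintype.card ι).choose (q - Fintype.card ι)) ?_
    · rw [smul_eq_mul] at h1 h2
      exact h1.trans (h.le.trans h2)
    · intro e _
      set I : Finset (Fin n) := Finset.univ.image e with hI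
      have hIc : I.card = Fintype.card ι := by
        rw [hI, Finset.card_image_of_injective _ e.injective, Finset.card_univ]
      have : (Finset.powersetCard (q - Fintype.card ι) (Finset.univ \ I)).card =
          (n - Fintype.card ι).choose (q - Fintype.card ι) := by
        rw [Finset.card_powersetCard, Finset.card_sdiff_of_subset (Finset.subset_univ _), hIc]
        simp
      rw [← this]
      have hsub : ∀ Q : Finset (Fin n), Set.range e ⊆ ↑Q → I ⊆ Q := by
        intro Q hQ x hx
        obtain ⟨y, -, rfl⟩ := Finset.mem_image.1 hx
        exact hQ ⟨y, rfl⟩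
      apply Finset.card_le_card_of_injOn (fun Q => Q \ I)
      · intro Q hQ
        have hQ' := Finset.mem_filter.1 (Finset.mem_coe.1 hQ)
        have hc := (Finset.mem_powersetCard.1 (Finset.mem_filter.1 hQ'.1).1).2
        rw [Finset.mem_coe, Finset.mem_powersetCard]
        refine ⟨Finset.sdiff_subset_sdiff (Finset.subset_univ _) le_rfl, ?_⟩
        rw [Finset.card_sdiff_of_subset (hsub Q hQ'.2), hIc, hc]
      · intro Q hQ Q' hQ' heq
        have hQ1 := hsub _ (Finset.mem_filter.1 (Finset.mem_coe.1 hQ)).2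
        have hQ2 := hsub _ (Finset.mem_filter.1 (Finset.mem_coe.1 hQ')).2
        have heq : Q \ I = Q' \ I := heq
        rw [← Finset.sdiff_union_of_subset hQ1, heq, Finset.sdiff_union_of_subset hQ2]
  · intro Q hQ
    have hQ' := Finset.mem_filter.1 hQ
    have hc := (Finset.mem_powersetCard.1 hQ'.1).2
    have hcard : Fintype.card (ι ↪ Q) = q.descFactorial (Fintype.card ι) := by
      rw [Fintype.card_embedding_eq]
      simp [hc]
    rw [← hcard, ← Finset.card_univ]
    apply Finset.card_le_card_of_injOn (fun e : ι ↪ Q => e.trans (Function.Embedding.subtype _))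
    · intro e _
      have hr : Set.range (e.trans (Function.Embedding.subtype (· ∈ Q))) ⊆ (↑Q : Set (Fin n)) := by
        rintro _ ⟨x, rfl⟩
        exact (e x).2
      rw [Finset.mem_coe]
      exact Finset.mem_filter.2 ⟨Finset.mem_filter.2 ⟨Finset.mem_univ _, hA _ _ hr hQ'.2⟩, hr⟩
    · intro e _ e' _ heq
      ext x : 1
      have := DFunLike.congr_fun heq x
      exact Subtype.ext this

lemma sampling {n : ℕ} {ι : Type} [Fintype ι] (A : Set (Fin n) → Prop)
    (hA : ∀ S S' : Set (Fin n), S ⊆ S' → A S' → A S) (q : ℕ) (hq0 : Fintype.card ι ≤ q)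
    (hqn : q ≤ n) (hn : 4 * Fintype.card ι ^ 2 ≤ n) (hn0 : 0 < n)
    (hg : (n.choose q) ≤ 3 *
      ((((Finset.univ : Finset (Fin n)).powersetCard q).filter fun Q : Finset (Fin n) => A (↑Q : Set (Fin n))).card)) :
    1 / 4 ≤ Pr ι (Fin n) (fun ω => A (Set.range ω)) := by
  have h1 := embed_count (ι := ι) A hA q
  set q0 := Fintype.card ι with hq0'
  set E := (Finset.univ.filter fun e : ι ↪ Fin n => A (Set.range e)).card with hE
  set g := ((((Finset.univ : Finset (Fin n)).powersetCard q).filter fun Q : Finset (Fin n) => A (↑Q : Set (Fin n))).card) with hg'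
  have h2 : n.choose q * q.descFactorial q0 = (n - q0).choose (q - q0) * n.descFactorial q0 := by
    rw [Nat.descFactorial_eq_factorial_mul_choose, Nat.descFactorial_eq_factorial_mul_choose]
    have := Nat.choose_mul (n := n) (k := q) (s := q0) hq0
    calc _ = q0.factorial * (n.choose q * q.choose q0) := by ring
      _ = _ := by rw [this]; ring
  have hpos : 0 < (n - q0).choose (q - q0) := Nat.choose_pos (by omega)
  have h3 : n.descFactorial q0 ≤ 3 * E := by
    refine Nat.le_of_mul_le_mul_left ?_ hpos
    rw [← h2]
    calc _ ≤ 3 * g * q.descFactorial q0 := Nat.mul_le_mul_right _ hg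
      _ = 3 * (g * q.descFactorial q0) := by ring
      _ ≤ 3 * (E * (n - q0).choose (q - q0)) := Nat.mul_le_mul_left _ h1
      _ = _ := by ring
  have hnr : (0 : ℝ) < n := by exact_mod_cast hn0
  have h4 : (3 / 4 : ℝ) * (n : ℝ) ^ q0 ≤ n.descFactorial q0 := by
    have a1 : ((n + 1 - q0 : ℕ) : ℝ) ^ q0 ≤ n.descFactorial q0 := by
      exact_mod_cast Nat.pow_sub_le_descFactorial n q0
    refine le_trans ?_ a1
    have a2 : (n : ℝ) - q0 ≤ ((n + 1 - q0 : ℕ) : ℝ) := by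
      rw [Nat.cast_sub (by omega)]; push_cast; linarith
    have hq0n : (q0 : ℝ) ≤ n := by exact_mod_cast hq0.trans hqn
    have a3 : ((n : ℝ) - q0) ^ q0 ≤ ((n + 1 - q0 : ℕ) : ℝ) ^ q0 :=
      pow_le_pow_left₀ (by linarith) a2 _
    refine le_trans ?_ a3
    have hd : (q0 : ℝ) / n ≤ 1 := (div_le_one hnr).2 hq0n
    have a4 := one_add_mul_le_pow (a := -((q0 : ℝ) / n)) (by linarith) q0
    have a5 : (n : ℝ) - q0 = (1 + -((q0 : ℝ) / n)) * n := by field_simp; ring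
    rw [a5, mul_pow]
    refine mul_le_mul_of_nonneg_right (le_trans ?_ a4) (by positivity)
    have a6 : (q0 : ℝ) * (q0 / n) ≤ 1 / 4 := by
      rw [← mul_div_assoc, div_le_div_iff₀ hnr (by norm_num)]
      have : (4 : ℝ) * (q0 : ℝ) ^ 2 ≤ n := by exact_mod_cast hn
      linarith
    linarith
  rw [Pr_eq, le_div_iff₀ (by simp; positivity)]
  have h5 : E ≤ (Finset.univ.filter fun ω : ι → Fin n => A (Set.range ω)).card := by
    apply Finset.card_le_card_of_injOn (fun e : ι ↪ Fin n => (e : ι → Fin n))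
    · intro e he
      have := (Finset.mem_filter.1 (Finset.mem_coe.1 he)).2
      rw [Finset.mem_coe]
      exact Finset.mem_filter.2 ⟨Finset.mem_univ _, this⟩
    · intro e _ e' _ h
      exact DFunLike.coe_injective h
  have h5' : (E : ℝ) ≤ ((Finset.univ.filter fun ω : ι → Fin n => A (Set.range ω)).card : ℝ) := by
    exact_mod_cast h5
  have h3' : (n.descFactorial q0 : ℝ) ≤ 3 * E := by exact_mod_cast h3
  have h6 : (Fintype.card (ι → Fin n) : ℝ) = (n : ℝ) ^ q0 := by simp [hq0']
  rw [h6]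
  linarith

lemma good_of_induced {n : ℕ} (G : SimpleGraph (Fin n)) (k t : ℕ)
    (f : Fin t → MvPolynomial (Fin k ⊕ Fin k) ℝ) (Φ : (Fin t → Bool) → Bool)
    {m : ℕ} (Q : Finset (Fin n)) (h : Q.card = m)
    (hm : inducedOn G Q h ∈ SemiAlgebraicProp k t f Φ m) : GoodSet G k t f Φ ↑Q := by
  obtain ⟨p, hp⟩ := hm
  refine ⟨fun v => if hv : v ∈ Q then p ((Q.orderIsoOfFin h).symm ⟨v, hv⟩) else 0, ?_⟩
  intro u hu v hv huv
  rw [Finset.mem_coe] at hu hv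
  have := hp ((Q.orderIsoOfFin h).symm ⟨u, hu⟩) ((Q.orderIsoOfFin h).symm ⟨v, hv⟩) (by
    intro h'
    apply huv
    have := (Q.orderIsoOfFin h).symm.injective h'
    simpa using this)
  simp only [inducedOn, SimpleGraph.comap_adj, OrderIso.apply_symm_apply] at this
  simp only [hu, hv, dif_pos]
  exact this

end sampling
section finish

lemma core {n : ℕ} [NeZero n] (G : SimpleGraph (Fin n)) {L N B J : ℕ} [NeZero N]
    (k t : ℕ) (f : Fin t → MvPolynomial (Fin k ⊕ Fin k) ℝ) (Φ : (Fin t → Bool) → Bool)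
    (hL : 0 < L) (hB : 0 < B) (hJ : 0 < J) (q : ℕ) (hq : L + B * N + J ≤ q) (hqn : q ≤ n)
    (hn : 4 * (L + B * N + J) ^ 2 ≤ n) {ε : ℝ} (hε : 0 < ε)
    (hfar : Far (SemiAlgebraicProp k t f Φ) G ε)
    (hcon : ¬ ((2 / 3 : ℝ) * (((Finset.univ : Finset (Fin n)).powersetCard q).card : ℝ) ≤
      ((((Finset.univ : Finset (Fin n)).powersetCard q).filter
        fun Q => ∃ h : Q.card = q, inducedOn G Q h ∉ SemiAlgebraicProp k t f Φ q).card : ℝ))) :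
    ε * (1 / 4) ≤ 1 / B + ((N : ℝ) ^ 2 / n + 2 * (1 / J +
      ((L + (L + 1) ^ (∑ j, (f j).support.card) : ℕ) : ℝ) / N) + 2 * (2 * Nat.log 2 N / L)) := by
  have hcard : Fintype.card (Idx L N B J) = L + B * N + J := by
    simp [ZMod.card]
  have hgood : n.choose q ≤ 3 * ((((Finset.univ : Finset (Fin n)).powersetCard q).filter
      fun Q : Finset (Fin n) => GoodSet G k t f Φ (↑Q : Set (Fin n))).card) := by
    have h1 := Finset.card_filter_add_card_filter_not
      (s := (Finset.univ : Finset (Fin n)).powersetCard q)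
      (fun Q => ∃ h : Q.card = q, inducedOn G Q h ∉ SemiAlgebraicProp k t f Φ q)
    have h2 : (((Finset.univ : Finset (Fin n)).powersetCard q).filter
        (fun Q => ¬ ∃ h : Q.card = q, inducedOn G Q h ∉ SemiAlgebraicProp k t f Φ q)).card ≤
        (((Finset.univ : Finset (Fin n)).powersetCard q).filter
      fun Q : Finset (Fin n) => GoodSet G k t f Φ (↑Q : Set (Fin n))).card := by
      apply Finset.card_le_card
      intro Q hQ
      have hQ' := Finset.mem_filter.1 hQ
      refine Finset.mem_filter.2 ⟨hQ'.1, ?_⟩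
      have hc := (Finset.mem_powersetCard.1 hQ'.1).2
      apply good_of_induced G k t f Φ Q hc
      by_contra h
      exact hQ'.2 ⟨hc, h⟩
    push Not at hcon
    have h3 : ((Finset.univ : Finset (Fin n)).powersetCard q).card = n.choose q := by simp
    rw [h3] at hcon h1
    generalize (((Finset.univ : Finset (Fin n)).powersetCard q).filter
        (fun Q => ∃ h : Q.card = q, inducedOn G Q h ∉ SemiAlgebraicProp k t f Φ q)).card = x
      at hcon h1
    have h4 : ((3 * x : ℕ) : ℝ) < ((2 * n.choose q : ℕ) : ℝ) := by push_cast; linarith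
    have h5 : 3 * x < 2 * n.choose q := by exact_mod_cast h4
    omega
  have hPr := sampling (ι := Idx L N B J) (fun S => GoodSet G k t f Φ S)
    (fun S S' h h' => h'.mono h) q (by rw [hcard]; exact hq) hqn (by rw [hcard]; exact hn)
    (Nat.pos_of_ne_zero (NeZero.ne n)) hgood
  obtain ⟨i, hi⟩ := evP_exists (N := N) G hL
  obtain ⟨j, hj⟩ := evA_exists (L := L) (N := N) (B := B) G k t f Φ hJ
  have hQ := evQ_le (N := N) G k t f Φ i
  have hPr2 : 1 / 4 ≤ Pr (Idx L N B J) (Fin n) (fun ω => GoodSet G k t f Φ (setS ω j.val)) := by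
    refine hPr.trans (Pr_mono fun ω h => h.mono ?_)
    rintro w (⟨l, rfl⟩ | ⟨b, z, rfl⟩ | ⟨r, hr, rfl⟩) <;> exact ⟨_, rfl⟩
  have hm := main_avg G k t f Φ i j.val hB (N := N) (ε := ε) (η := (N : ℝ) ^ 2 / n + 2 * (1 / J +
      ((L + (L + 1) ^ (∑ j, (f j).support.card) : ℕ) : ℝ) / N) + 2 * (2 * Nat.log 2 N / L))
      (by positivity) hfar (fun b b' hb => (bad_le G k t f Φ i j b b' hb).trans (by linarith))
  exact (mul_le_mul_of_nonneg_left hPr2 hε.le).trans hm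

lemma params (D : ℕ) : ∃ w : ℕ, ∀ m : ℕ, 3 ≤ m → ∃ L N : ℕ, 0 < L ∧ 0 < N ∧
    256 * m * Nat.log 2 N ≤ L ∧ 128 * m * (L + (L + 1) ^ D) ≤ N ∧
    64 * m * (L + 64 * m * N + 128 * m) ^ 2 ≤ m ^ w := by
  obtain ⟨a, ha⟩ : ∃ a : ℕ, 256 * (9 + (a + 3) * (D + 1)) ≤ 2 ^ a := by
    set C := 1024 * (D + 1) with hC
    refine ⟨3 * (6 * C), ?_⟩
    have h1 : 6 * C ≤ 2 ^ (6 * C) := Nat.lt_two_pow_self.le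
    have h2 : (6 * C) ^ 3 ≤ 2 ^ (3 * (6 * C)) := by
      rw [mul_comm 3, pow_mul]
      exact Nat.pow_le_pow_left h1 3
    refine le_trans ?_ h2
    have hC1 : 1 ≤ C := by omega
    have h3 : 256 * (9 + (3 * (6 * C) + 3) * (D + 1)) ≤ C * (18 * C + 3) := by
      rw [hC]; nlinarith
    refine h3.trans ?_
    have h4 : C * (18 * C + 3) ≤ 21 * C ^ 2 := by nlinarith
    have h5 : 21 * C ^ 2 ≤ (6 * C) ^ 3 := by nlinarith [sq_nonneg C]
    exact h4.trans h5
  obtain ⟨A, hA⟩ : ∃ A, A = a + 2 := ⟨_, rfl⟩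
  obtain ⟨E, hE⟩ : ∃ E, E = 9 + (A + 1) * (D + 1) := ⟨_, rfl⟩
  have ha : 256 * E ≤ 2 ^ a := by rw [hE, hA]; exact ha
  refine ⟨7 + 2 * (A + E + 17), fun m hm => ?_⟩
  have hm1 : 1 ≤ m := by omega
  have hp : ∀ {x y : ℕ}, x ≤ y → m ^ x ≤ m ^ y := fun h => Nat.pow_le_pow_right hm1 h
  have h2m : ∀ x : ℕ, 2 ^ x ≤ m ^ x := fun x => Nat.pow_le_pow_left (by omega) x
  have hLm : m ^ A + 1 ≤ m ^ (A + 1) := by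
    have : 1 ≤ m ^ A := Nat.one_le_pow _ _ hm1
    rw [pow_succ m A]; nlinarith
  have hN : 256 * m * (m ^ A + 1) ^ (D + 1) ≤ m ^ E := by
    have h8 : 256 ≤ m ^ 8 := by simpa using h2m 8
    calc 256 * m * (m ^ A + 1) ^ (D + 1) ≤ m ^ 8 * m * (m ^ (A + 1)) ^ (D + 1) := by gcongr
      _ = m ^ E := by rw [hE, ← pow_mul, pow_add]; ring
  refine ⟨m ^ A, 256 * m * (m ^ A + 1) ^ (D + 1), by positivity, by positivity, ?_, ?_, ?_⟩
  · have hlog : Nat.log 2 (256 * m * (m ^ A + 1) ^ (D + 1)) ≤ m * E := by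
      refine (Nat.log_mono_right hN).trans ?_
      have : m ^ E ≤ 2 ^ (m * E) := by
        rw [pow_mul]
        exact Nat.pow_le_pow_left Nat.lt_two_pow_self.le _
      exact (Nat.log_mono_right this).trans (by rw [Nat.log_pow (by norm_num)])
    calc _ ≤ 256 * m * (m * E) := by gcongr
      _ = (256 * E) * m ^ 2 := by ring
      _ ≤ 2 ^ a * m ^ 2 := by gcongr
      _ ≤ m ^ a * m ^ 2 := by gcongr; omega
      _ = m ^ A := by rw [hA, pow_add]
  · have h1 : m ^ A + (m ^ A + 1) ^ D ≤ 2 * (m ^ A + 1) ^ (D + 1) := by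
      have : 1 ≤ (m ^ A + 1) ^ D := Nat.one_le_pow _ _ (by omega)
      rw [pow_succ (m ^ A + 1) D]
      generalize (m ^ A + 1) ^ D = M at this
      generalize m ^ A = P
      have h5 : P * 1 ≤ P * M := Nat.mul_le_mul_left _ this
      nlinarith
    calc _ ≤ 128 * m * (2 * (m ^ A + 1) ^ (D + 1)) := by gcongr
      _ = _ := by ring
  · have h64 : 64 ≤ m ^ 6 := by simpa using h2m 6
    have h128 : 128 ≤ m ^ 7 := by simpa using h2m 7
    have hs : m ^ A + 64 * m * (256 * m * (m ^ A + 1) ^ (D + 1)) + 128 * m ≤ m ^ (A + E + 17) := by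
      calc _ ≤ m ^ A + m ^ 6 * m * m ^ E + m ^ 7 * m := by gcongr
        _ = m ^ A + m ^ (7 + E) + m ^ 8 := by ring
        _ ≤ m ^ (A + E + 16) + m ^ (A + E + 16) + m ^ (A + E + 16) := by
          exact add_le_add (add_le_add (hp (by omega)) (hp (by omega))) (hp (by omega))
        _ = 3 * m ^ (A + E + 16) := by ring
        _ ≤ m * m ^ (A + E + 16) := by gcongr
        _ = _ := by ring
    calc _ ≤ m ^ 6 * m * (m ^ (A + E + 17)) ^ 2 := by gcongr
      _ = _ := by rw [← pow_succ, ← pow_mul, ← pow_add]; congr 1; ring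

end finish

/-- Every semi-algebraic graph property is easily testable. -/
theorem semi_algebraic_easily_testable (k t : ℕ) (hk : 1 ≤ k) (ht : 1 ≤ t)
    (f : Fin t → MvPolynomial (Fin k ⊕ Fin k) ℝ) (Φ : (Fin t → Bool) → Bool) :
    EasilyTestable (SemiAlgebraicProp k t f Φ) := by
  obtain ⟨w, hw⟩ := params (∑ j, (f j).support.card)
  refine ⟨((2 * (w + 1) : ℕ) : ℝ), by positivity, ?_⟩
  intro ε hε hε2 n G hn hfar
  by_contra hcon
  set m := ⌈1 / ε⌉₊ with hm
  have hy : 2 < 1 / ε := by rw [lt_div_iff₀ hε]; linarith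
  have hm3 : 3 ≤ m := by
    have : 2 < m := Nat.lt_ceil.2 (by exact_mod_cast hy)
    omega
  have hmε : 1 / ε ≤ m := Nat.le_ceil _
  have hm2 : (m : ℝ) ≤ (1 / ε) ^ 2 := by
    have := (Nat.ceil_lt_add_one (a := 1 / ε) (by positivity)).le
    nlinarith
  obtain ⟨L, N, hL, hN, h1, h2, h3⟩ := hw m hm3
  have hpow : ε ^ (-((2 * (w + 1) : ℕ) : ℝ)) = ((1 / ε) ^ 2) ^ (w + 1) := by
    rw [Real.rpow_neg hε.le, Real.rpow_natCast, ← pow_mul, one_div, inv_pow]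
  have hmw : ((m ^ w : ℕ) : ℝ) ≤ ε ^ (-((2 * (w + 1) : ℕ) : ℝ)) := by
    rw [hpow]
    push_cast
    have hm1 : (1 : ℝ) ≤ m := by exact_mod_cast (by omega : 1 ≤ m)
    calc (m : ℝ) ^ w ≤ (m : ℝ) ^ (w + 1) := pow_le_pow_right₀ hm1 (by omega)
      _ ≤ _ := pow_le_pow_left₀ (by positivity) hm2 _
  set q := ⌈ε ^ (-((2 * (w + 1) : ℕ) : ℝ))⌉₊ with hq
  have hwq : m ^ w ≤ q := by
    have : ((m ^ w : ℕ) : ℝ) ≤ q := hmw.trans (Nat.le_ceil _)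
    exact_mod_cast this
  have hqn : q ≤ n := Nat.ceil_le.2 hn
  set q0 := L + 64 * m * N + 128 * m with hq0
  have hq0N : N ≤ q0 := by
    have : N ≤ 64 * m * N := Nat.le_mul_of_pos_left _ (by omega)
    omega
  have hq01 : 1 ≤ q0 := by omega
  have hb1 : q0 ≤ q := by
    refine le_trans ?_ (h3.trans hwq)
    nlinarith
  have hb2 : 4 * q0 ^ 2 ≤ n := by
    refine le_trans ?_ (h3.trans (hwq.trans hqn))
    exact Nat.mul_le_mul_right _ (by omega)
  have hb3 : 64 * m * N ^ 2 ≤ n := by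
    refine le_trans ?_ (h3.trans (hwq.trans hqn))
    gcongr
  haveI : NeZero n := ⟨by omega⟩
  haveI : NeZero N := ⟨by omega⟩
  have hc := core G (L := L) (N := N) (B := 64 * m) (J := 128 * m) k t f Φ hL (by omega) (by omega)
    q hb1 hqn hb2 hε hfar hcon
  have hmr : (0 : ℝ) < m := by exact_mod_cast (by omega : 0 < m)
  have hnr : (0 : ℝ) < n := by exact_mod_cast (by omega : 0 < n)
  have hNr : (0 : ℝ) < N := by exact_mod_cast hN
  have hLr : (0 : ℝ) < L := by exact_mod_cast hL
  have c1 : (N : ℝ) ^ 2 / n ≤ 1 / 64 * (1 / m) := by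
    have : (64 : ℝ) * m * N ^ 2 ≤ n := by exact_mod_cast hb3
    rw [div_mul_div_comm, div_le_div_iff₀ hnr (by positivity)]
    linarith
  have c2 : ((L + (L + 1) ^ (∑ j, (f j).support.card) : ℕ) : ℝ) / N ≤ 1 / 128 * (1 / m) := by
    have : (128 : ℝ) * m * ((L + (L + 1) ^ (∑ j, (f j).support.card) : ℕ) : ℝ) ≤ N := by
      exact_mod_cast h2
    rw [div_mul_div_comm, div_le_div_iff₀ hNr (by positivity)]
    linarith
  have c3 : 2 * (Nat.log 2 N : ℝ) / L ≤ 1 / 128 * (1 / m) := by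
    have : (256 : ℝ) * m * (Nat.log 2 N : ℝ) ≤ L := by exact_mod_cast h1
    rw [div_mul_div_comm, div_le_div_iff₀ hLr (by positivity)]
    linarith
  have c4 : 1 / ((64 * m : ℕ) : ℝ) = 1 / 64 * (1 / m) := by
    push_cast; rw [div_mul_div_comm, one_mul]
  have c5 : 1 / ((128 * m : ℕ) : ℝ) = 1 / 128 * (1 / m) := by
    push_cast; rw [div_mul_div_comm, one_mul]
  have c6 : 1 / (m : ℝ) ≤ ε := by
    rw [div_le_iff₀ hmr]
    rw [div_le_iff₀ hε] at hmε
    linarith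
  have c7 : 0 < 1 / (m : ℝ) := by positivity
  rw [c4, c5] at hc
  linarith

end
end

section
/- There exists a family F of graphs that contains a bipartite graph, a co-bipartite graph and a split graph, but for which the property P*_F of being induced F-free is not easily testable. -/
open scoped Classical
open Finset

noncomputable section

/-- `H` has a closed walk of length `j`. -/
def CW {V : Type*} (H : SimpleGraph V) (j : ℕ) : Prop :=
  ∃ a : ℕ → V, (∀ i < j, H.Adj (a i) (a (i + 1))) ∧ a j = a 0

lemma CW.map {V W : Type*} {H : SimpleGraph V} {K : SimpleGraph W} {j : ℕ} (f : V → W)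
    (hf : ∀ u v, H.Adj u v → K.Adj (f u) (f v)) (h : CW H j) : CW K j := by
  obtain ⟨a, ha, hj⟩ := h
  exact ⟨fun i => f (a i), fun i hi => hf _ _ (ha i hi), by simp [hj]⟩

/-- The cycle of length `m`. -/
def Cyc (m : ℕ) : SimpleGraph (ZMod m) :=
  SimpleGraph.fromRel fun x y => y = x + 1

lemma cyc_adj {m : ℕ} {x y : ZMod m} (h : (Cyc m).Adj x y) : y = x + 1 ∨ y = x - 1 := by
  rw [Cyc, SimpleGraph.fromRel_adj] at h
  rcases h.2 with h | h
  · exact Or.inl h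
  · right; rw [h]; ring

lemma cyc_no_short {m j : ℕ} (hj : Odd j) (hjm : j < m) : ¬ CW (Cyc m) j := by
  rintro ⟨a, ha, h0⟩
  have key : ∀ i ≤ j, ∃ t : ℤ, a i = a 0 + (t : ZMod m) ∧ |t| ≤ i ∧ (2 : ℤ) ∣ t - i := by
    intro i
    induction i with
    | zero => intro _; exact ⟨0, by simp, by simp, by simp⟩
    | succ i ih =>
      intro hi
      obtain ⟨t, h1, h2, h3⟩ := ih (by omega)
      rw [abs_le] at h2
      rcases cyc_adj (ha i (by omega)) with h | h
      · refine ⟨t + 1, by rw [h, h1]; push_cast; ring, ?_, ?_⟩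
        · rw [abs_le]; push_cast; omega
        · push_cast; omega
      · refine ⟨t - 1, by rw [h, h1]; push_cast; ring, ?_, ?_⟩
        · rw [abs_le]; push_cast; omega
        · push_cast; omega
  obtain ⟨t, h1, h2, h3⟩ := key j le_rfl
  have h4 : (t : ZMod m) = 0 := by
    rw [h0] at h1
    exact (left_eq_add.mp h1)
  rw [ZMod.intCast_zmod_eq_zero_iff_dvd] at h4
  have h5 : t = 0 := Int.eq_zero_of_abs_lt_dvd h4 (by omega)
  obtain ⟨k, hk⟩ := hj
  omega

/-- The spider with three legs of length two. -/
def Spi : SimpleGraph (Fin 7) :=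
  SimpleGraph.fromRel fun x y => (x = 0 ∧ (y = 1 ∨ y = 2 ∨ y = 3)) ∨
    (x = 1 ∧ y = 4) ∨ (x = 2 ∧ y = 5) ∨ (x = 3 ∧ y = 6)

lemma spi_no {m : ℕ} (f : Fin 7 → ZMod m) (hf : ∀ u v, Spi.Adj u v ↔ (Cyc m).Adj (f u) (f v)) :
    False := by
  have h1 := cyc_adj ((hf 0 1).1 (by simp [Spi]))
  have h2 := cyc_adj ((hf 0 2).1 (by simp [Spi]))
  have h3 := cyc_adj ((hf 0 3).1 (by simp [Spi]))
  have e14 : Spi.Adj 1 4 := by simp [Spi]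
  have e25 : Spi.Adj 2 5 := by simp [Spi]
  have n24 : ¬ Spi.Adj 2 4 := by simp [Spi]
  have n34 : ¬ Spi.Adj 3 4 := by simp [Spi]
  have n35 : ¬ Spi.Adj 3 5 := by simp [Spi]
  rw [hf] at e14 e25 n24 n34 n35
  have a12 : f 1 ≠ f 2 := fun h => n24 (h ▸ e14)
  have a13 : f 1 ≠ f 3 := fun h => n34 (h ▸ e14)
  have a23 : f 2 ≠ f 3 := fun h => n35 (h ▸ e25)
  grind

/-- The family. -/
def Fam : Set (Σ k : ℕ, SimpleGraph (Fin k)) :=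
  {p | p = ⟨3, ⊤⟩ ∨ p = ⟨7, Spi⟩ ∨ ∃ j, Odd j ∧ 5 ≤ j ∧ p.1 = j ^ (j + 1) ∧ CW p.2 j}

/-- Second coordinates of the edge-disjoint cycles. -/
def cc (m : ℕ) {N : ℕ} (s t : ZMod N) (x : ℕ) : ZMod N :=
  if x + 1 = m then s + t else if x = m then s else if Even x then s else t

lemma cc_inj {m N : ℕ} (hm : Odd m) {s t s' t' : ZMod N} {x : ℕ} (hx : x < m)
    (h1 : cc m s t x = cc m s' t' x) (h2 : cc m s t (x + 1) = cc m s' t' (x + 1)) :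
    s = s' ∧ t = t' := by
  unfold cc at h1 h2
  have hx' : x ≠ m := by omega
  by_cases a : x + 1 = m
  · have : x + 1 + 1 ≠ m := by omega
    simp only [a, if_true] at h1 h2
    simp at h2
    subst h2
    simpa using h1
  · by_cases b : x + 1 + 1 = m
    · have hx2 : ¬ Even x := by
        rw [Nat.not_even_iff_odd]
        obtain ⟨k, hk⟩ := hm
        exact ⟨k - 1, by omega⟩
      simp only [a, b, hx', hx2, if_true, if_false] at h1 h2
      subst h1
      simpa using h2
    · by_cases hx2 : Even x
      · have : ¬ Even (x + 1) := by simpa [Nat.even_add_one] using hx2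
        simp only [a, b, hx', hx2, this, if_true, if_false] at h1 h2
        exact ⟨h1, h2⟩
      · have : Even (x + 1) := by simpa [Nat.even_add_one] using hx2
        simp only [a, b, hx', hx2, this, if_true, if_false] at h1 h2
        exact ⟨h2, h1⟩

lemma far_aux {m N n : ℕ} [NeZero N] (hm : Odd m) (hm5 : 5 ≤ m)
    (e : Fin n ≃ ZMod m × ZMod N) (H : SimpleGraph (Fin n)) (hH : ¬ CW H m) :
    N ^ 2 ≤ editDist ((Cyc m).comap fun v => (e v).1) H := by
  have cast_inj : ∀ x y : ℕ, x < m → y < m → (x : ZMod m) = y → x = y := by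
    intro x y hx hy h
    rw [ZMod.natCast_eq_natCast_iff] at h
    exact Nat.ModEq.eq_of_lt_of_lt h hx hy
  have h1 : ∀ p : ZMod N × ZMod N, ∃ x < m,
      ¬ H.Adj (e.symm ((x : ZMod m), cc m p.1 p.2 x))
        (e.symm (((x + 1 : ℕ) : ZMod m), cc m p.1 p.2 (x + 1))) := by
    intro p
    by_contra! hc
    refine hH ⟨fun x => e.symm ((x : ZMod m), cc m p.1 p.2 x), hc, ?_⟩
    have h0 : (0 : ℕ) + 1 ≠ m := by omega
    have h0' : (0 : ℕ) ≠ m := by omega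
    simp only [cc, h0, h0']
    simp
  choose x hx hadj using h1
  let g : ZMod N × ZMod N → Sym2 (Fin n) := fun p =>
    s(e.symm ((x p : ZMod m), cc m p.1 p.2 (x p)),
      e.symm (((x p + 1 : ℕ) : ZMod m), cc m p.1 p.2 (x p + 1)))
  have two : (2 : ZMod m) ≠ 0 := by
    intro h
    have := cast_inj 2 0 (by omega) (by omega) (by simpa using h)
    omega
  have one : (1 : ZMod m) ≠ 0 := by
    intro h
    have := cast_inj 1 0 (by omega) (by omega) (by simpa using h)
    omega
  have ginj : Function.Injective g := by
    intro p q h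
    simp only [g, Sym2.eq_iff, EmbeddingLike.apply_eq_iff_eq, Prod.mk.injEq] at h
    rcases h with ⟨⟨a, b⟩, c, d⟩ | ⟨⟨a, b⟩, c, d⟩
    · have hxx := cast_inj _ _ (hx p) (hx q) a
      rw [← hxx] at b d
      have := cc_inj hm (hx p) b d
      exact Prod.ext this.1 this.2
    · exfalso
      push_cast at a c
      rw [a] at c
      apply two
      linear_combination c
  have hcard : (Set.range g).ncard = N ^ 2 := by
    rw [← Set.image_univ, Set.ncard_image_of_injective _ ginj, Set.ncard_univ]
    simp [Nat.card_prod, sq]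
  rw [← hcard, editDist]
  apply Set.ncard_le_ncard _ (Set.toFinite _)
  rintro _ ⟨p, rfl⟩
  left
  refine ⟨?_, ?_⟩
  · simp only [g, SimpleGraph.mem_edgeSet, SimpleGraph.comap_adj, Equiv.apply_symm_apply, Cyc,
      SimpleGraph.fromRel_adj]
    push_cast
    refine ⟨fun h => one ?_, Or.inl rfl⟩
    linear_combination -h
  · simpa only [g, SimpleGraph.mem_edgeSet] using hadj p

lemma free_aux {m n k : ℕ} (hm5 : 5 ≤ m) (π : Fin n → ZMod m) (hk : k < m ^ (m + 1))
    (f : Fin k ↪ Fin n) :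
    (((Cyc m).comap π).comap f) ∈ InducedFree Fam k := by
  intro p hp
  refine ⟨fun φ => ?_⟩
  have hφ : ∀ u v, p.2.Adj u v ↔ (Cyc m).Adj (π (f (φ u))) (π (f (φ v))) :=
    fun u v => φ.map_adj_iff.symm
  rcases hp with rfl | rfl | ⟨j, hj, hj5, hp1, hcw⟩
  · refine cyc_no_short (m := m) (j := 3) (by decide) (by omega)
      (CW.map (H := (⊤ : SimpleGraph (Fin 3))) _ (fun u v h => (hφ u v).1 h) ?_)
    refine ⟨fun i => ⟨i % 3, Nat.mod_lt _ (by norm_num)⟩, ?_, by simp⟩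
    intro i hi
    simp only [SimpleGraph.top_adj, ne_eq, Fin.mk.injEq]
    omega
  · exact spi_no _ hφ
  · refine cyc_no_short hj ?_ (CW.map _ (fun u v h => (hφ u v).1 h) hcw)
    by_contra! hle
    have h1 : p.1 ≤ k := by simpa using Fintype.card_le_of_injective _ φ.injective
    have h2 : m ^ (m + 1) ≤ j ^ (j + 1) :=
      (Nat.pow_le_pow_left hle _).trans (Nat.pow_le_pow_right (by omega) (by omega))
    omega

lemma not_easy : ¬ EasilyTestable (InducedFree Fam) := by
  rintro ⟨c, hc, h⟩
  obtain ⟨K, hK⟩ := exists_nat_gt c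
  set m := 2 * K + 5 with hm
  have hmodd : Odd m := ⟨K + 2, by omega⟩
  have hm5 : 5 ≤ m := by omega
  have hm0 : (0 : ℝ) < m := by positivity
  have hm5' : (5 : ℝ) ≤ m := by exact_mod_cast hm5
  have : NeZero m := ⟨by omega⟩
  have : NeZero (m ^ m) := ⟨by positivity⟩
  have hcard : Fintype.card (Fin (m ^ (m + 1))) = Fintype.card (ZMod m × ZMod (m ^ m)) := by
    simp [ZMod.card, pow_succ, mul_comm]
  let e := Fintype.equivOfCardEq hcard
  have hε : (((m : ℝ) ^ 2)⁻¹) ^ (-c) ≤ (m : ℝ) ^ m := by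
    rw [Real.inv_rpow (by positivity), Real.rpow_neg (by positivity), inv_inv,
      ← Real.rpow_natCast (m : ℝ) 2, ← Real.rpow_mul hm0.le, ← Real.rpow_natCast (m : ℝ) m]
    apply Real.rpow_le_rpow_of_exponent_le (by linarith)
    rw [hm]; push_cast; linarith
  have hceil : ⌈(((m : ℝ) ^ 2)⁻¹) ^ (-c)⌉₊ ≤ m ^ m := by
    rw [Nat.ceil_le]; exact_mod_cast hε
  have hlt : m ^ m < m ^ (m + 1) := Nat.pow_lt_pow_right (by omega) (by omega)
  have h' := h (((m : ℝ) ^ 2)⁻¹) (by positivity)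
    (by rw [one_div]; apply inv_strictAnti₀ (by norm_num); nlinarith)
    (m ^ (m + 1)) ((Cyc m).comap fun v => (e v).1)
    (hε.trans (by exact_mod_cast hlt.le)) (by
      intro H hH
      have hcw : ¬ CW H m := fun hcw =>
        (hH ⟨_, H⟩ (Or.inr (Or.inr ⟨m, hmodd, hm5, rfl, hcw⟩))).false
          (SimpleGraph.Embedding.refl)
      have := far_aux hmodd hm5 e H hcw
      have h2 : (((m ^ m) ^ 2 : ℕ) : ℝ) ≤ (editDist ((Cyc m).comap fun v => (e v).1) H : ℝ) := by
        exact_mod_cast this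
      refine le_trans (le_of_eq ?_) h2
      push_cast
      field_simp
      ring)
  generalize ⌈(((m : ℝ) ^ 2)⁻¹) ^ (-c)⌉₊ = k at h' hceil
  rw [Finset.filter_false_of_mem (by
    rintro Q - ⟨hQ, hn⟩
    have hi : Function.Injective fun i => ((Q.orderIsoOfFin hQ) i : Fin (m ^ (m + 1))) :=
      fun a b hab => (Q.orderIsoOfFin hQ).injective (Subtype.ext hab)
    exact hn (free_aux hm5 (fun v => (e v).1) (by omega) ⟨_, hi⟩))] at h'
  rw [Finset.card_powersetCard, Finset.card_univ, Fintype.card_fin] at h'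
  have : 0 < (m ^ (m + 1)).choose k := Nat.choose_pos (by omega)
  have : (0 : ℝ) < ((m ^ (m + 1)).choose k : ℝ) := by exact_mod_cast this
  simp only [Finset.card_empty, Nat.cast_zero] at h'
  linarith

/-- There is a family of graphs containing a bipartite graph, a co-bipartite
graph and a split graph for which being induced `𝓕`-free is not easily testable. -/
theorem exists_family_bip_cobip_split_not_easily_testable :
    ∃ 𝓕 : Set (Σ k : ℕ, SimpleGraph (Fin k)),
      (∃ p ∈ 𝓕, IsBipGraph p.2) ∧ (∃ p ∈ 𝓕, IsCoBipGraph p.2) ∧ (∃ p ∈ 𝓕, IsSplitGraph p.2) ∧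
      ¬ EasilyTestable (InducedFree 𝓕) := by
  refine ⟨Fam, ⟨⟨7, Spi⟩, Or.inr (Or.inl rfl), {1, 2, 3}, ?_, ?_⟩,
    ⟨⟨3, ⊤⟩, Or.inl rfl, Set.univ, ?_, ?_⟩, ⟨⟨3, ⊤⟩, Or.inl rfl, Set.univ, ?_, ?_⟩, not_easy⟩
  · intro u hu v hv
    simp only [Set.mem_insert_iff, Set.mem_singleton_iff] at hu hv
    rcases hu with rfl | rfl | rfl <;> rcases hv with rfl | rfl | rfl <;> simp [Spi]
  · intro u hu v hv
    fin_cases u <;> fin_cases v <;> simp [Spi] at hu hv ⊢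
  · intro u _ v _ h; simpa using h
  · intro u hu; simp at hu
  · intro u _ v _ h; simpa using h
  · intro u hu; simp at hu

end
end

section
/- If a family F of graphs contains a bipartite graph, a co-bipartite graph and a split graph, then F has a bipartite obstruction: there exists a bipartite graph H with bipartition (S,T) such that every completion of H contains an induced copy of some member of F. -/
open scoped Classical
open Finset

noncomputable section

theorem ramsey_aux {V : Type} (G : SimpleGraph V) : ∀ (n r s : ℕ), r + s = n → ∀ S : Finset V,
    2 ^ n ≤ S.card → (∃ C ⊆ S, C.card = r ∧ ∀ x ∈ C, ∀ y ∈ C, x ≠ y → G.Adj x y) ∨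
      (∃ C ⊆ S, C.card = s ∧ ∀ x ∈ C, ∀ y ∈ C, x ≠ y → ¬ G.Adj x y) := by
  intro n
  induction n with
  | zero =>
    intro r s h S _
    left
    exact ⟨∅, by simp, by simp; omega, by simp⟩
  | succ n ih =>
    intro r s h S hS
    rcases Nat.eq_zero_or_pos r with rfl | hr
    · left
      exact ⟨∅, by simp, by simp, by simp⟩
    rcases Nat.eq_zero_or_pos s with rfl | hs
    · right
      exact ⟨∅, by simp, by simp, by simp⟩
    have hpos : 0 < S.card := lt_of_lt_of_le (by positivity) hS
    obtain ⟨v, hv⟩ := Finset.card_pos.mp hpos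
    have h1 : ((S.erase v).filter (fun x => G.Adj v x)).card +
        ((S.erase v).filter (fun x => ¬ G.Adj v x)).card = S.card - 1 := by
      rw [Finset.card_filter_add_card_filter_not, Finset.card_erase_of_mem hv]
    have h2 : 2 ^ n ≤ ((S.erase v).filter (fun x => G.Adj v x)).card ∨
        2 ^ n ≤ ((S.erase v).filter (fun x => ¬ G.Adj v x)).card := by
      rw [pow_succ] at hS
      omega
    rcases h2 with h2 | h2
    · rcases ih (r - 1) s (by omega) _ h2 with ⟨C, hC, hc, hh⟩ | ⟨C, hC, hc, hh⟩
      · left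
        have hm : ∀ x ∈ C, x ≠ v ∧ x ∈ S ∧ G.Adj v x := by
          intro x hx
          have := hC hx
          simp at this
          tauto
        refine ⟨insert v C, ?_, ?_, ?_⟩
        · intro x hx
          grind
        · rw [Finset.card_insert_of_notMem (fun h => (hm v h).1 rfl)]
          omega
        · intro x hx y hy hxy
          have := fun x y => G.adj_comm x y
          grind
      · right
        exact ⟨C, fun x hx => by have := hC hx; simp at this; tauto, hc, hh⟩
    · rcases ih r (s - 1) (by omega) _ h2 with ⟨C, hC, hc, hh⟩ | ⟨C, hC, hc, hh⟩
      · left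
        exact ⟨C, fun x hx => by have := hC hx; simp at this; tauto, hc, hh⟩
      · right
        have hm : ∀ x ∈ C, x ≠ v ∧ x ∈ S ∧ ¬ G.Adj v x := by
          intro x hx
          have := hC hx
          simp at this
          tauto
        refine ⟨insert v C, ?_, ?_, ?_⟩
        · intro x hx
          grind
        · rw [Finset.card_insert_of_notMem (fun h => (hm v h).1 rfl)]
          omega
        · intro x hx y hy hxy
          have := fun x y => G.adj_comm x y
          grind

theorem ramsey_fin (n : ℕ) : ∃ N : ℕ, ∀ G : SimpleGraph (Fin N), ∃ (g : Fin n ↪ Fin N) (c : Prop),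
    ∀ i j, i ≠ j → (G.Adj (g i) (g j) ↔ c) := by
  refine ⟨2 ^ (n + n), fun G => ?_⟩
  have key : ∀ C : Finset (Fin (2 ^ (n + n))), C.card = n →
      ∃ g : Fin n ↪ Fin (2 ^ (n + n)), ∀ i, g i ∈ C := fun C hC =>
    ⟨(C.orderEmbOfFin hC).toEmbedding, fun i => C.orderEmbOfFin_mem hC i⟩
  rcases ramsey_aux G (n + n) n n rfl Finset.univ (by simp) with ⟨C, _, hc, hh⟩ | ⟨C, _, hc, hh⟩
  · obtain ⟨g, hg⟩ := key C hc
    exact ⟨g, True, fun i j hij => by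
      simpa using hh _ (hg i) _ (hg j) (fun h => hij (g.injective h))⟩
  · obtain ⟨g, hg⟩ := key C hc
    exact ⟨g, False, fun i j hij => by
      simpa using hh _ (hg i) _ (hg j) (fun h => hij (g.injective h))⟩

theorem ramsey_type (α : Type) [Fintype α] : ∃ N : ℕ, ∀ G : SimpleGraph (Fin N),
    ∃ (g : α ↪ Fin N) (c : Prop), ∀ i j, i ≠ j → (G.Adj (g i) (g j) ↔ c) := by
  obtain ⟨N, hN⟩ := ramsey_fin (Fintype.card α)
  refine ⟨N, fun G => ?_⟩
  obtain ⟨g, c, h⟩ := hN G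
  exact ⟨(Fintype.equivFin α).toEmbedding.trans g, c, fun i j hij => h _ _ (by simpa using hij)⟩

theorem universal_bip (K : ℕ) : ∃ (a b : ℕ) (B : Fin a → Fin b → Prop),
    ∀ G : SimpleGraph (Fin a ⊕ Fin b),
      (∀ s : Fin a, ∀ t : Fin b, G.Adj (Sum.inl s) (Sum.inr t) ↔ B s t) →
      ∃ c d : Prop, ∀ k ≤ K, ∀ (P : SimpleGraph (Fin k)) (A : Set (Fin k)),
        (∀ u ∈ A, ∀ v ∈ A, u ≠ v → (P.Adj u v ↔ c)) →
        (∀ u ∉ A, ∀ v ∉ A, u ≠ v → (P.Adj u v ↔ d)) → Nonempty (P ↪g G) := by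
  obtain ⟨L, hL⟩ := ramsey_type (Fin K)
  obtain ⟨N, hN⟩ := ramsey_type ((Fin L → Prop) × Fin K)
  let e := Fintype.equivFin ((Fin N → Prop) × Fin L)
  refine ⟨N, Fintype.card ((Fin N → Prop) × Fin L), fun s t => (e.symm t).1 s, fun G hG => ?_⟩
  obtain ⟨g, c, hg⟩ := hN (G.comap Sum.inl)
  let w : Fin L → Fin (Fintype.card ((Fin N → Prop) × Fin L)) :=
    fun j => e (fun s => ∃ x, g x = s ∧ x.1 j, j)
  have hw : ∀ x j, G.Adj (Sum.inl (g x)) (Sum.inr (w j)) ↔ x.1 j := by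
    intro x j
    rw [hG]
    simp only [w, Equiv.symm_apply_apply]
    constructor
    · rintro ⟨y, hy, h⟩
      rwa [← g.injective hy]
    · exact fun h => ⟨x, rfl, h⟩
  have hwi : Function.Injective w := by
    intro i j h
    have := e.injective h
    exact (Prod.mk.inj this).2
  obtain ⟨f, d, hf⟩ := hL (G.comap (fun j => Sum.inr (w j)))
  refine ⟨c, d, fun k hk P A hA hA' => ?_⟩
  let ι : Fin k → Fin K := Fin.castLE hk
  have hι : Function.Injective ι := Fin.castLE_injective hk
  let row : Fin k → (Fin L → Prop) × Fin K :=
    fun i => (fun l => ∃ j, f (ι j) = l ∧ P.Adj i j, ι i)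
  have hrow : Function.Injective row := fun i j h => hι (Prod.mk.inj h).2
  have hrow' : ∀ i j, (row i).1 (f (ι j)) ↔ P.Adj i j := by
    intro i j
    constructor
    · rintro ⟨j', h, h'⟩
      rwa [← hι (f.injective h)]
    · exact fun h => ⟨j, rfl, h⟩
  let φ : Fin k → Fin N ⊕ Fin (Fintype.card ((Fin N → Prop) × Fin L)) :=
    fun i => if i ∈ A then Sum.inl (g (row i)) else Sum.inr (w (f (ι i)))
  have hφ : Function.Injective φ := by
    intro i j h
    by_cases hi : i ∈ A <;> by_cases hj : j ∈ A <;> simp [φ, hi, hj] at h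
    · exact hrow h
    · exact hι (f.injective (hwi h))
  refine ⟨⟨⟨φ, hφ⟩, ?_⟩⟩
  intro i j
  change G.Adj (φ i) (φ j) ↔ P.Adj i j
  by_cases hij : i = j
  · subst hij; simp
  by_cases hi : i ∈ A <;> by_cases hj : j ∈ A <;> simp only [φ, hi, hj, if_true, if_false]
  · rw [hA i hi j hj hij]
    exact hg _ _ (fun h => hij (hrow h))
  · rw [hw, hrow']
  · rw [G.adj_comm, hw, hrow', P.adj_comm]
  · rw [hA' i hi j hj hij]
    exact hf _ _ (fun h => hij (hι h))

/-- If a family `𝓕` contains a bipartite graph, a co-bipartite graph and a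
split graph, then `𝓕` has a bipartite obstruction: a bipartite graph `H` with bipartition
`(S, T)` (encoded by the relation `B` between `S = Fin a` and `T = Fin b`) such that every
completion of `H` (i.e. every graph agreeing with `B` between `S` and `T`) contains an induced
copy of some member of `𝓕`. -/
theorem exists_bipartite_obstruction
    (𝓕 : Set (Σ k : ℕ, SimpleGraph (Fin k)))
    (hbip : ∃ p ∈ 𝓕, IsBipGraph p.2)
    (hcobip : ∃ p ∈ 𝓕, IsCoBipGraph p.2)
    (hsplit : ∃ p ∈ 𝓕, IsSplitGraph p.2) :
    ∃ (a b : ℕ) (B : Fin a → Fin b → Prop),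
      ∀ G : SimpleGraph (Fin a ⊕ Fin b),
        (∀ s : Fin a, ∀ t : Fin b, G.Adj (Sum.inl s) (Sum.inr t) ↔ B s t) →
        ∃ p ∈ 𝓕, Nonempty (p.2 ↪g G) := by
  obtain ⟨p, hp, A, hA, hA'⟩ := hbip
  obtain ⟨q, hq, B, hB, hB'⟩ := hcobip
  obtain ⟨r, hr, C, hC, hC'⟩ := hsplit
  obtain ⟨a, b, R, hR⟩ := universal_bip (p.1 + q.1 + r.1)
  refine ⟨a, b, R, fun G hG => ?_⟩
  obtain ⟨c, d, h⟩ := hR G hG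
  by_cases hc : c <;> by_cases hd : d
  · exact ⟨q, hq, h q.1 (by omega) q.2 B (by simpa [hc] using hB) (by simpa [hd] using hB')⟩
  · refine ⟨r, hr, h r.1 (by omega) r.2 C (by simpa [hc] using hC) ?_⟩
    exact fun u hu v hv _ => iff_of_false (hC' u hu v hv) hd
  · refine ⟨r, hr, h r.1 (by omega) r.2 Cᶜ ?_ ?_⟩
    · exact fun u hu v hv _ => iff_of_false (hC' u hu v hv) hc
    · exact fun u hu v hv huv => iff_of_true (hC u (not_not.mp hu) v (not_not.mp hv) huv) hd
  · refine ⟨p, hp, h p.1 (by omega) p.2 A ?_ ?_⟩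
    · exact fun u hu v hv _ => iff_of_false (hA u hu v hv) hc
    · exact fun u hu v hv _ => iff_of_false (hA' u hu v hv) hd

end
end

section
/- Let H be a bipartite graph with bipartition (S,T) where |S| = |T| = k, let α ∈ (0,1), and suppose an n-vertex graph G with n ≥ 4k/α contains at least α·n^{2k} induced bipartite copies of H. Then at least a 2/3-fraction of the ⌈4k/α⌉-element vertex subsets of G contain an induced bipartite copy of H. -/
open scoped Classical
open Finset

noncomputable section

/-- The number of induced bipartite copies in `G` of the bipartite graph with bipartition
`(Fin k, Fin k)` and edge relation `B`: injections `φ` of the two sides into `V(G)` such that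
for all `s ∈ S`, `t ∈ T` we have `B s t ↔ φ s ∼ φ t` (no condition inside the sides). -/
def bipCopyCount {k n : ℕ} (B : Fin k → Fin k → Prop) (G : SimpleGraph (Fin n)) : ℕ :=
  Set.ncard {φ : (Fin k ⊕ Fin k) ↪ Fin n |
    ∀ s t : Fin k, B s t ↔ G.Adj (φ (Sum.inl s)) (φ (Sum.inr t))}

/-- The edge density `d(X,Y)` between two (disjoint) vertex sets, as a real number. -/
def dens {n : ℕ} (G : SimpleGraph (Fin n)) (X Y : Finset (Fin n)) : ℝ :=
  (G.edgeDensity X Y : ℝ)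

/-- The pair `(X,Y)` is `δ`-homogeneous: `d(X,Y) ≥ 1 - δ` or `d(X,Y) ≤ δ`. -/
def HomPair {n : ℕ} (G : SimpleGraph (Fin n)) (δ : ℝ) (X Y : Finset (Fin n)) : Prop :=
  1 - δ ≤ dens G X Y ∨ dens G X Y ≤ δ

/-- The dominant value of the pair `(X,Y)` is `1` (it is `0` otherwise). -/
def DomOne {n : ℕ} (G : SimpleGraph (Fin n)) (X Y : Finset (Fin n)) : Prop :=
  1 / 2 ≤ dens G X Y

/-- `Q` is an equipartition: the parts are disjoint, cover everything, and their sizes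
differ by at most one. -/
def IsEquipartition {n q : ℕ} (Q : Fin q → Finset (Fin n)) : Prop :=
  (∀ i j : Fin q, i ≠ j → Disjoint (Q i) (Q j)) ∧ (∀ v : Fin n, ∃ i, v ∈ Q i) ∧
  (∀ i j : Fin q, (Q i).card ≤ (Q j).card + 1)

lemma sc_exists_perm {n : ℕ} (Q Q' : Finset (Fin n)) (h : Q.card = Q'.card) :
    ∃ σ : Equiv.Perm (Fin n), ∀ x, σ x ∈ Q' ↔ x ∈ Q := by
  have e : {x // x ∈ Q} ≃ {x // x ∈ Q'} := Finset.equivOfCardEq h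
  refine ⟨e.extendSubtype, fun x => ⟨fun hx => ?_, fun hx => e.extendSubtype_mem x hx⟩⟩
  by_contra hq
  exact e.extendSubtype_not_mem x hq hx

lemma sc_key {n m : ℕ} {ι : Type} [Fintype ι] (hc : Fintype.card ι ≤ m) (hm : m ≤ n)
    (Bd : Finset (Finset (Fin n))) (hB : Bd ⊆ (Finset.univ : Finset (Fin n)).powersetCard m)
    (F : Finset (ι → Fin n))
    (h : ∀ f : ι → Fin n, ∀ Q ∈ Bd, (∀ i, f i ∈ Q) → f ∈ F) :
    (Bd.card : ℝ) * (n : ℝ) ^ (Fintype.card ι) ≤ (F.card : ℝ) * (n.choose m : ℝ) := by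
  set P := (Finset.univ : Finset (Fin n)).powersetCard m with hP
  have hPc : P.card = n.choose m := by simp [hP]
  let w : (ι → Fin n) → ℝ := fun f => ((P.filter fun Q => ∀ i, f i ∈ Q).card : ℝ)⁻¹
  let W : Finset (Fin n) → ℝ := fun Q => ∑ f : ι → Fin n, if ∀ i, f i ∈ Q then w f else 0
  have hw0 : ∀ f, 0 ≤ w f := fun f => by positivity
  have hne : ∀ f : ι → Fin n, (P.filter fun Q => ∀ i, f i ∈ Q).Nonempty := by
    intro f
    have h1 : (Finset.univ.image f).card ≤ m := (Finset.card_image_le).trans (by simpa using hc)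
    obtain ⟨Q, hQ1, hQ2⟩ := Finset.exists_superset_card_eq h1 (by simpa using hm)
    refine ⟨Q, ?_⟩
    simp only [Finset.mem_filter, hP, Finset.mem_powersetCard]
    exact ⟨⟨Finset.subset_univ _, hQ2⟩, fun i => hQ1 (by simp)⟩
  have hsum1 : ∀ f, (∑ Q ∈ P, if ∀ i, f i ∈ Q then w f else 0) = 1 := by
    intro f
    rw [← Finset.sum_filter, Finset.sum_const, nsmul_eq_mul]
    have : (0 : ℝ) < ((P.filter fun Q => ∀ i, f i ∈ Q).card : ℝ) := by
      exact_mod_cast (hne f).card_pos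
    exact mul_inv_cancel₀ this.ne'
  have hwσ : ∀ (σ : Equiv.Perm (Fin n)) f, w (fun i => σ (f i)) = w f := by
    intro σ f
    simp only [w]
    congr 2
    symm
    refine Finset.card_bij (fun Q _ => Q.map σ.toEmbedding) ?_ ?_ ?_
    · intro Q hQ
      simp only [Finset.mem_filter, hP, Finset.mem_powersetCard] at hQ ⊢
      refine ⟨⟨Finset.subset_univ _, by simpa using hQ.1.2⟩, fun i => ?_⟩
      simpa using hQ.2 i
    · intro a _ b _ hab
      exact Finset.map_injective _ hab
    · intro Q hQ
      simp only [Finset.mem_filter, hP, Finset.mem_powersetCard] at hQ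
      refine ⟨Q.map σ.symm.toEmbedding, ?_, ?_⟩
      · simp only [Finset.mem_filter, hP, Finset.mem_powersetCard]
        refine ⟨⟨Finset.subset_univ _, by simpa using hQ.1.2⟩, fun i => ?_⟩
        rw [Finset.mem_map]
        exact ⟨σ (f i), hQ.2 i, by simp⟩
      · ext x; simp
  have hW : ∀ Q ∈ P, ∀ Q' ∈ P, W Q = W Q' := by
    intro Q hQ Q' hQ'
    simp only [hP, Finset.mem_powersetCard] at hQ hQ'
    obtain ⟨σ, hσ⟩ := sc_exists_perm Q Q' (hQ.2.trans hQ'.2.symm)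
    refine Fintype.sum_equiv (Equiv.arrowCongr (Equiv.refl ι) σ) _ _ ?_
    intro f
    have : (Equiv.arrowCongr (Equiv.refl ι) σ) f = fun i => σ (f i) := by ext; simp
    rw [this, hwσ]
    simp only [hσ]
  have htot : ∑ Q ∈ P, W Q = (n : ℝ) ^ (Fintype.card ι) := by
    simp only [W]
    rw [Finset.sum_comm]
    simp [hsum1]
  have hbad : ∑ Q ∈ Bd, W Q ≤ (F.card : ℝ) := by
    simp only [W]
    rw [Finset.sum_comm]
    have : (F.card : ℝ) = ∑ f : ι → Fin n, if f ∈ F then (1 : ℝ) else 0 := by simp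
    rw [this]
    refine Finset.sum_le_sum fun f _ => ?_
    split_ifs with hf
    · rw [← hsum1 f]
      refine Finset.sum_le_sum_of_subset_of_nonneg hB fun Q _ _ => ?_
      split_ifs
      · exact hw0 f
      · exact le_rfl
    · refine (Finset.sum_eq_zero fun Q hQ => ?_).le
      rw [if_neg]
      exact fun hq => hf (h f Q hQ hq)
  rcases Bd.eq_empty_or_nonempty with rfl | ⟨Q0, hQ0⟩
  · simp; positivity
  have e1 : ∑ Q ∈ P, W Q = P.card * W Q0 := by
    rw [Finset.sum_congr rfl fun Q hQ => hW Q hQ Q0 (hB hQ0)]; simp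
  have e2 : ∑ Q ∈ Bd, W Q = Bd.card * W Q0 := by
    rw [Finset.sum_congr rfl fun Q hQ => hW Q (hB hQ) Q0 (hB hQ0)]; simp
  rw [← htot, e1, ← hPc]
  rw [e2] at hbad
  have : (0 : ℝ) ≤ P.card := by positivity
  nlinarith

lemma sc_bern (α : ℝ) (hα0 : 0 < α) (hα1 : α < 1) : (1 - α) ^ ⌊2 / α⌋₊ ≤ 1 / 3 := by
  set j := ⌊2 / α⌋₊
  have hj : 2 / α < j + 1 := Nat.lt_floor_add_one _
  have hj' : 2 - α < j * α := by
    rw [div_lt_iff₀ hα0] at hj; linarith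
  have h1 : 0 < 1 - α := by linarith
  have hb := one_add_mul_le_pow (a := α / (1 - α)) (by have : 0 ≤ α / (1 - α) := by positivity
                                                       linarith) j
  have h2 : 1 + α / (1 - α) = (1 - α)⁻¹ := by field_simp; ring
  rw [h2, inv_pow] at hb
  have h3 : 2 ≤ j * (α / (1 - α)) := by
    rw [← mul_div_assoc, le_div_iff₀ h1]; linarith
  have h4 : 3 ≤ ((1 - α) ^ j)⁻¹ := by linarith
  have h5 : 0 < (1 - α) ^ j := by positivity
  rw [one_div]
  exact (le_inv_comm₀ (by norm_num) h5).1 h4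

/-- If an `n`-vertex graph `G` (with `n ≥ 4k/α`) contains at least
`α·n^{2k}` induced bipartite copies of a bipartite graph `H` with sides of size `k`, then at
least a `2/3`-fraction of the `⌈4k/α⌉`-element vertex subsets contain such a copy. -/
theorem sample_contains_induced_bipartite_copy {k n : ℕ} (B : Fin k → Fin k → Prop)
    (α : ℝ) (hα0 : 0 < α) (hα1 : α < 1) (G : SimpleGraph (Fin n))
    (hn : (4 * k / α : ℝ) ≤ (n : ℝ))
    (hcopies : α * (n : ℝ) ^ (2 * k) ≤ (bipCopyCount B G : ℝ)) :
    (2 / 3 : ℝ) * (((Finset.univ : Finset (Fin n)).powersetCard ⌈(4 * k / α : ℝ)⌉₊).card : ℝ) ≤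
      ((((Finset.univ : Finset (Fin n)).powersetCard ⌈(4 * k / α : ℝ)⌉₊).filter
        fun Q => ∃ φ : (Fin k ⊕ Fin k) ↪ Fin n, (∀ x, φ x ∈ Q) ∧
          ∀ s t : Fin k, B s t ↔ G.Adj (φ (Sum.inl s)) (φ (Sum.inr t))).card : ℝ) := by
  rcases Nat.eq_zero_or_pos k with rfl | hk
  · rw [Finset.filter_true_of_mem]
    · have : (0 : ℝ) ≤ (((Finset.univ : Finset (Fin n)).powersetCard
        ⌈(4 * (0 : ℕ) / α : ℝ)⌉₊).card : ℝ) := by positivity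
      linarith
    · intro Q _
      exact ⟨⟨fun x => isEmptyElim x, fun x => isEmptyElim x⟩, fun x => isEmptyElim x,
        fun s => isEmptyElim s⟩
  have hkR : (0 : ℝ) < k := by exact_mod_cast hk
  set m := ⌈(4 * k / α : ℝ)⌉₊ with hmdef
  have hmn : m ≤ n := Nat.ceil_le.2 hn
  have hn0 : (0 : ℝ) < n := lt_of_lt_of_le (by positivity) hn
  set j := ⌊2 / α⌋₊ with hj
  have hjm : j * (2 * k) ≤ m := by
    have h1 : (j : ℝ) ≤ 2 / α := Nat.floor_le (by positivity)
    have h2 : (4 * k / α : ℝ) ≤ m := Nat.le_ceil _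
    have h3 : (j : ℝ) * (2 * k) ≤ 2 / α * (2 * k) := by gcongr
    have h4 : 2 / α * (2 * k) = 4 * k / α := by ring
    have : (j : ℝ) * (2 * k) ≤ m := by linarith
    exact_mod_cast this
  let good : ((Fin k ⊕ Fin k) ↪ Fin n) → Prop := fun φ =>
    ∀ s t : Fin k, B s t ↔ G.Adj (φ (Sum.inl s)) (φ (Sum.inr t))
  let C : Finset ((Fin k ⊕ Fin k) → Fin n) :=
    (Finset.univ.filter good).image (fun (φ : (Fin k ⊕ Fin k) ↪ Fin n) => φ.toFun)
  have hC : C.card = bipCopyCount B G := by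
    have hinj : Function.Injective (fun (φ : (Fin k ⊕ Fin k) ↪ Fin n) => φ.toFun) :=
      fun a b hab => DFunLike.coe_injective hab
    rw [Finset.card_image_of_injective _ hinj, bipCopyCount, Set.ncard_eq_toFinset_card']
    congr 1
    ext φ
    simp [good]
  let P := (Finset.univ : Finset (Fin n)).powersetCard m
  let good' : Finset (Fin n) → Prop := fun Q =>
    ∃ φ : (Fin k ⊕ Fin k) ↪ Fin n, (∀ x, φ x ∈ Q) ∧
          ∀ s t : Fin k, B s t ↔ G.Adj (φ (Sum.inl s)) (φ (Sum.inr t))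
  change (2 / 3 : ℝ) * (P.card : ℝ) ≤ ((P.filter good').card : ℝ)
  let Bd := P.filter (fun Q => ¬ good' Q)
  have hsplit : ((P.filter good').card : ℝ) + (Bd.card : ℝ) = P.card := by
    exact_mod_cast Finset.card_filter_add_card_filter_not (s := P) good'
  let F0 : Finset (Fin j → ((Fin k ⊕ Fin k) → Fin n)) := Fintype.piFinset fun _ => Cᶜ
  let F : Finset (Fin j × (Fin k ⊕ Fin k) → Fin n) :=
    F0.map (Equiv.curry (Fin j) (Fin k ⊕ Fin k) (Fin n)).symm.toEmbedding
  have hcι : Fintype.card (Fin j × (Fin k ⊕ Fin k)) = j * (2 * k) := by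
    simp [two_mul]
  have hkey := sc_key (n := n) (m := m) (ι := Fin j × (Fin k ⊕ Fin k)) (by rw [hcι]; exact hjm)
    hmn Bd (Finset.filter_subset _ _) F (by
      intro f Q hQ hf
      rw [Finset.mem_map_equiv]
      simp only [F0, Fintype.mem_piFinset, Finset.mem_compl]
      intro i hi
      simp only [C, Finset.mem_image, Finset.mem_filter, Finset.mem_univ, true_and] at hi
      obtain ⟨φ, hφ, hφe⟩ := hi
      refine (Finset.mem_filter.1 hQ).2 ⟨φ, fun x => ?_, hφ⟩
      have := congrFun hφe x
      change φ x = f (i, x) at this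
      rw [this]
      exact hf (i, x))
  have hFc : (F.card : ℝ) = ((n : ℝ) ^ (2 * k) - bipCopyCount B G) ^ j := by
    rw [Finset.card_map, Fintype.card_piFinset]
    simp only [Finset.prod_const, Finset.card_univ, Fintype.card_fin]
    push_cast
    rw [Finset.card_compl, Nat.cast_sub (Finset.card_le_univ _), hC]
    simp [two_mul]
  have hle : ((n : ℝ) ^ (2 * k) - bipCopyCount B G) ^ j ≤
      ((1 - α) * (n : ℝ) ^ (2 * k)) ^ j := by
    apply pow_le_pow_left₀
    · have : C.card ≤ n ^ (2 * k) := by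
        refine (Finset.card_le_univ _).trans_eq ?_
        simp [two_mul]
      rw [hC] at this
      have : (bipCopyCount B G : ℝ) ≤ (n : ℝ) ^ (2 * k) := by exact_mod_cast this
      linarith
    · linarith
  have hPc : P.card = n.choose m := by simp [P]
  rw [hcι, hFc, ← hPc] at hkey
  have hN : (0 : ℝ) < (n : ℝ) ^ (j * (2 * k)) := by positivity
  have hb := sc_bern α hα0 hα1
  have hchain : (Bd.card : ℝ) * (n : ℝ) ^ (j * (2 * k)) ≤
      (1 / 3 * P.card) * (n : ℝ) ^ (j * (2 * k)) := by
    calc _ ≤ _ := hkey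
      _ ≤ ((1 - α) * (n : ℝ) ^ (2 * k)) ^ j * P.card := by gcongr
      _ = (1 - α) ^ j * ((n : ℝ) ^ (j * (2 * k)) * P.card) := by
        rw [mul_pow, ← pow_mul, mul_comm (2 * k) j]; ring
      _ ≤ 1 / 3 * ((n : ℝ) ^ (j * (2 * k)) * P.card) := by gcongr
      _ = _ := by ring
  have := le_of_mul_le_mul_right hchain hN
  linarith

end
end
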